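/- arXiv:1410.7449 — 4 statements merged into one kernel-verified Lean document; each statement's English description precedes it below -/
import Mathlib

section
/- Let F be a field of characteristic p (possibly 0) with algebraic closure F̄. Let f ∈ F[t][x₁] be square-free as an element of F̄[t][x₁], let a, b, c ∈ F[t] with gcd(a,b) = 1, and let Ψ : F[t][x₁] → F[t][x₁,x₂] be the F[t]-algebra homomorphism with Ψ(x₁) = a·x₁ + b·x₂ + c. If at least one of the following holds, then Ψ(f) is separable in t: (1) p = 0 or p > max(deg a, deg b, deg c)·deg_{x₁} f + deg_t f; (2) a ≠ 0 and b/a ∉ F(t^p). -/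
/-- `f ∈ F[t][x₁,…,x_d]` is separable in `t`: viewed as a univariate polynomial in `t` with
coefficients in the rational function field `F(x₁,…,x_d)`, it is separable. -/
noncomputable def sepInT {F : Type*} [Field F] {σ : Type*}
    (f : MvPolynomial σ (Polynomial F)) : Prop :=
  Polynomial.Separable
    (MvPolynomial.eval₂
      (Polynomial.mapRingHom
        ((algebraMap (MvPolynomial σ F) (FractionRing (MvPolynomial σ F))).comp MvPolynomial.C))
      (fun i => Polynomial.C
        (algebraMap (MvPolynomial σ F) (FractionRing (MvPolynomial σ F)) (MvPolynomial.X i)))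
      f)

/-- The degree in `t` of `f ∈ F[t][x]` (outer variable `x`, inner variable `t`). -/
noncomputable def degTP {F : Type*} [CommRing F] (f : Polynomial (Polynomial F)) : ℕ :=
  f.support.sup fun i => (f.coeff i).natDegree

/-- The condition that the rational function `b/a ∈ F(t)` does not lie in the subfield
`F(t^p)` generated over (the image of) `F` by `t^p`, where `p = ringChar F`. -/
def notInFtp (F : Type*) [Field F] (a b : Polynomial F) : Prop :=
  (algebraMap (Polynomial F) (RatFunc F)) b / (algebraMap (Polynomial F) (RatFunc F)) a ∉
    Subfield.closure (Set.range (RatFunc.C (K := F)) ∪ {RatFunc.X ^ ringChar F})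

namespace LinSub

open Polynomial

set_option synthInstance.maxHeartbeats 400000
set_option maxSynthPendingDepth 10

variable {E : Type*} [Field E]

/-- the linear form -/
noncomputable def Y (a b c : E[X]) : (MvPolynomial (Fin 2) E)[X] :=
  a.map MvPolynomial.C * C (MvPolynomial.X 0) + b.map MvPolynomial.C * C (MvPolynomial.X 1)
    + c.map MvPolynomial.C

/-- the substitution -/
noncomputable def psi (a b c : E[X]) : E[X][X] →+* (MvPolynomial (Fin 2) E)[X] :=
  eval₂RingHom (mapRingHom MvPolynomial.C) (Y a b c)

@[simp] lemma psi_C (a b c h : E[X]) : psi a b c (C h) = h.map MvPolynomial.C := by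
  simp [psi]

@[simp] lemma psi_X (a b c : E[X]) : psi a b c X = Y a b c := by
  simp [psi]

noncomputable def tau (a b c u v : E[X]) : E[X][X][X] →+* (MvPolynomial (Fin 2) E)[X] :=
  eval₂RingHom (psi a b c)
    (u.map MvPolynomial.C * C (MvPolynomial.X 1) - v.map MvPolynomial.C * C (MvPolynomial.X 0))

noncomputable def tauInv (a b c u v : E[X]) : (MvPolynomial (Fin 2) E)[X] →+* E[X][X][X] :=
  eval₂RingHom (MvPolynomial.eval₂Hom ((C : E[X][X] →+* E[X][X][X]).comp
      ((C : E[X] →+* E[X][X]).comp (C : E →+* E[X])))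
    ![C (C u) * (C X - C (C c)) - C (C b) * X, C (C v) * (C X - C (C c)) + C (C a) * X]) (C (C X))

@[simp] lemma tau_C (a b c u v : E[X]) (q : E[X][X]) : tau a b c u v (C q) = psi a b c q := by
  simp [tau]

@[simp] lemma tau_X (a b c u v : E[X]) : tau a b c u v X =
    u.map MvPolynomial.C * C (MvPolynomial.X 1) - v.map MvPolynomial.C * C (MvPolynomial.X 0) := by
  simp [tau]

lemma tauInv_map (a b c u v h : E[X]) :
    tauInv a b c u v (h.map MvPolynomial.C) = C (C h) := by
  have : (tauInv a b c u v).comp (mapRingHom MvPolynomial.C) = C.comp C := by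
    apply Polynomial.ringHom_ext
    · intro x; simp [tauInv]
    · simp [tauInv]
  exact congrArg (fun g => g h) this

@[simp] lemma tauInv_x0 (a b c u v : E[X]) :
    tauInv a b c u v (C (MvPolynomial.X 0)) = C (C u) * (C X - C (C c)) - C (C b) * X := by
  simp [tauInv]

@[simp] lemma tauInv_x1 (a b c u v : E[X]) :
    tauInv a b c u v (C (MvPolynomial.X 1)) = C (C v) * (C X - C (C c)) + C (C a) * X := by
  simp [tauInv]

lemma CC {a b u v : E[X]} (h : u * a + v * b = 1) :
    (C (C u) * C (C a) + C (C v) * C (C b) : E[X][X][X]) = 1 := by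
  rw [← C_mul, ← C_mul, ← C_mul, ← C_mul, ← C_add, ← C_add, h, C_1, C_1]

lemma MM {a b u v : E[X]} (h : u * a + v * b = 1) :
    (u.map MvPolynomial.C * a.map MvPolynomial.C + v.map MvPolynomial.C * b.map MvPolynomial.C
      : (MvPolynomial (Fin 2) E)[X]) = 1 := by
  rw [← Polynomial.map_mul, ← Polynomial.map_mul, ← Polynomial.map_add, h, Polynomial.map_one]

lemma inv_tau {a b c u v : E[X]} (h : u * a + v * b = 1) :
    (tauInv a b c u v).comp (tau a b c u v) = RingHom.id _ := by
  have h1 := CC h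
  apply Polynomial.ringHom_ext'
  · apply Polynomial.ringHom_ext'
    · refine RingHom.ext fun x => ?_
      simp only [RingHom.comp_apply, tau_C, psi_C, tauInv_map, RingHom.id_apply]
    · simp only [RingHom.comp_apply, tau_C, psi_X, Y, map_add, map_mul, tauInv_map, tauInv_x0,
        tauInv_x1, RingHom.id_apply]
      linear_combination (C X - C (C c)) * h1
  · simp only [RingHom.comp_apply, tau_X, map_sub, map_mul, tauInv_map, tauInv_x0,
        tauInv_x1, RingHom.id_apply]
    linear_combination X * h1

lemma tau_CC (a b c u v h : E[X]) : tau a b c u v (C (C h)) = h.map MvPolynomial.C := by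
  simp

lemma tau_inv {a b c u v : E[X]} (h : u * a + v * b = 1) :
    (tau a b c u v).comp (tauInv a b c u v) = RingHom.id _ := by
  have h1 := MM h
  apply Polynomial.ringHom_ext'
  · apply MvPolynomial.ringHom_ext
    · intro x
      simp [tauInv]
    · intro i
      fin_cases i
      · simp only [RingHom.comp_apply, Fin.zero_eta, tauInv_x0, RingHom.id_apply, map_sub, map_mul,
          tau_X, tau_C, psi_X, psi_C, Y]
        linear_combination C (MvPolynomial.X 0) * h1
      · simp only [RingHom.comp_apply, Fin.mk_one, tauInv_x1, RingHom.id_apply, map_sub, map_mul,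
          map_add, tau_X, tau_C, psi_X, psi_C, Y]
        linear_combination C (MvPolynomial.X 1) * h1
  · simp [tauInv]

noncomputable def tauE {a b c u v : E[X]} (h : u * a + v * b = 1) :
    E[X][X][X] ≃+* (MvPolynomial (Fin 2) E)[X] :=
  RingEquiv.ofRingHom (tau a b c u v) (tauInv a b c u v) (tau_inv h) (inv_tau h)

lemma tauE_C {a b c u v : E[X]} (h : u * a + v * b = 1) (q : E[X][X]) :
    tauE (c := c) h (C q) = psi a b c q := by
  simp [tauE]

lemma psi_inj {a b u v : E[X]} (c : E[X]) (h : u * a + v * b = 1) :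
    Function.Injective (psi a b c) := by
  intro q r hqr
  rw [← tauE_C h, ← tauE_C h] at hqr
  exact C_injective ((tauE h).injective hqr)

lemma psi_dvd {a b u v : E[X]} (c : E[X]) (h : u * a + v * b = 1) {q r : E[X][X]}
    (hqr : psi a b c q ∣ psi a b c r) : q ∣ r := by
  rw [← tauE_C h, ← tauE_C h, map_dvd_iff (tauE h)] at hqr
  rw [C_dvd_iff_dvd_coeff] at hqr
  simpa using hqr 0

lemma psi_prime {a b u v : E[X]} (c : E[X]) (h : u * a + v * b = 1) {q : E[X][X]}
    (hq : Prime q) : Prime (psi a b c q) := by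
  rw [← tauE_C h]
  exact (MulEquiv.prime_iff (tauE h)).2 (prime_C_iff.2 hq)

/-- chain rule -/
lemma chain (a b c : E[X]) (q : E[X][X]) :
    ∃ r : E[X][X], (∀ i, r.coeff i = derivative (q.coeff i)) ∧
      derivative (psi a b c q) = psi a b c r + psi a b c (derivative q) * derivative (Y a b c) := by
  induction q using Polynomial.induction_on' with
  | add p q hp hq =>
    obtain ⟨r, h1, h2⟩ := hp
    obtain ⟨s, h3, h4⟩ := hq
    refine ⟨r + s, fun i => by simp [h1, h3], ?_⟩
    simp only [map_add, h2, h4]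
    ring
  | monomial n h =>
    refine ⟨monomial n (derivative h), fun i => ?_, ?_⟩
    · simp only [coeff_monomial]; split_ifs <;> simp
    · rw [derivative_monomial]
      simp only [← C_mul_X_pow_eq_monomial, map_mul, map_pow, psi_C, psi_X, derivative_mul,
        derivative_pow, derivative_map, map_natCast, Polynomial.map_mul, Polynomial.map_natCast]
      ring

lemma deriv_Y {a b u v : E[X]} (c : E[X]) (h : u * a + v * b = 1) :
    derivative (Y a b c) = tau a b c u v
      (C (C (derivative a * u + derivative b * v) * (X - C c) + C (derivative c))
        + C (C (a * derivative b - derivative a * b)) * X) := by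
  have h1 := MM h
  simp only [map_add, map_mul, map_sub, tau_C, tau_X, psi_C, psi_X]
  simp only [Y, derivative_add, derivative_mul, derivative_C, derivative_map, Polynomial.map_sub,
    Polynomial.map_mul, Polynomial.map_add]
  linear_combination (-(derivative a).map MvPolynomial.C * C (MvPolynomial.X 0)
    - (derivative b).map MvPolynomial.C * C (MvPolynomial.X 1)) * h1

lemma deriv_zero {a b u v : E[X]} (c : E[X]) (h : u * a + v * b = 1)
    (hW : a * derivative b - derivative a * b ≠ 0) (q : E[X][X])
    (hq : derivative (psi a b c q) = 0) :
    derivative q = 0 ∧ ∀ i, derivative (q.coeff i) = 0 := by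
  obtain ⟨r, h1, h2⟩ := chain a b c q
  rw [hq, deriv_Y c h, ← tau_C a b c u v, ← tau_C a b c u v, ← map_mul, ← map_add] at h2
  have h3 := (map_eq_zero_iff (tauE h) (tauE h).injective).1 h2.symm
  have h4 := congrArg (fun g => coeff g 1) h3
  have h5 : derivative q = 0 := by
    simp only [mul_add, coeff_add, coeff_C_mul, coeff_mul_X, coeff_C_succ, ← mul_assoc, ← C_mul,
      coeff_C_zero, coeff_zero, zero_add] at h4
    exact (mul_eq_zero.1 h4).resolve_right (fun h => hW (C_eq_zero.1 h))
  refine ⟨h5, fun i => ?_⟩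
  rw [h5] at h3
  simp only [C_0, zero_mul, add_zero] at h3
  rw [← h1, C_eq_zero.1 h3, coeff_zero]

lemma exists_pow (p : ℕ) [Fact p.Prime] [CharP E p] [PerfectRing E p] (q : E[X][X])
    (h1 : derivative q = 0) (h2 : ∀ i, derivative (q.coeff i) = 0) : ∃ r, q = r ^ p := by
  have hp : p ≠ 0 := (Fact.out : p.Prime).ne_zero
  suffices q ∈ (frobenius E[X][X] p).range by
    obtain ⟨r, hr⟩ := this
    exact ⟨r, by rw [← hr, frobenius_def]⟩
  rw [← expand_contract p h1 hp, expand_eq_sum, Polynomial.sum_def]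
  refine sum_mem fun i _ => ?_
  have h3 := expand_contract p (h2 (i * p)) hp
  rw [polynomial_expand_eq] at h3
  refine ⟨C (((contract p (q.coeff (i * p))).map (frobeniusEquiv E p).symm)) * X ^ i, ?_⟩
  rw [coeff_contract hp, frobenius_def, mul_pow, ← C_pow, h3, ← pow_mul, ← pow_mul, mul_comm i p]

lemma exists_factor {a b u v : E[X]} (c : E[X]) (h : u * a + v * b = 1) 
    {K : Type*} [Field K] [Algebra (MvPolynomial (Fin 2) E) K]
    [IsFractionRing (MvPolynomial (Fin 2) E) K]
    (g : K[X]) (hg : Prime g) (f : E[X][X]) (hf : f ≠ 0)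
    (hgf : g ∣ (psi a b c f).map (algebraMap _ K)) :
    ∃ q, Prime q ∧ q ∣ f ∧ g ∣ (psi a b c q).map (algebraMap _ K) := by
  induction f using UniqueFactorizationMonoid.induction_on_prime with
  | h₁ => exact absurd rfl hf
  | h₂ x hx =>
    exact absurd (isUnit_of_dvd_unit hgf ((hx.map (psi a b c)).map
      (mapRingHom (algebraMap _ K)))) hg.not_isUnit
  | h₃ f p hf0 hp ih =>
    rw [map_mul, Polynomial.map_mul] at hgf
    rcases hg.dvd_or_dvd hgf with h1 | h1
    · exact ⟨p, hp, dvd_mul_right _ _, h1⟩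
    · obtain ⟨q, h2, h3, h4⟩ := ih hf0 h1
      exact ⟨q, h2, h3.mul_left p, h4⟩

lemma main {a b u v : E[X]} (c : E[X]) (h : u * a + v * b = 1) 
    {K : Type*} [Field K] [Algebra (MvPolynomial (Fin 2) E) K]
    [IsFractionRing (MvPolynomial (Fin 2) E) K]
    (f : E[X][X]) (hf : Squarefree f)
    (H : ∀ q, Prime q → q ∣ f → derivative (psi a b c q) = 0 → (psi a b c q).natDegree = 0) :
    ((psi a b c f).map (algebraMap _ K)).Separable := by
  classical
  have hinj : Function.Injective (algebraMap (MvPolynomial (Fin 2) E) K) :=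
    IsFractionRing.injective _ _
  letI : NormalizedGCDMonoid (MvPolynomial (Fin 2) E) :=
    Nonempty.some inferInstance
  have hf0 : f ≠ 0 := hf.ne_zero
  -- a prime dividing the image of a prime
  have key : ∀ g : K[X], Prime g → ∀ q, Prime q → g ∣ (psi a b c q).map (algebraMap _ K) →
      (psi a b c q).natDegree ≠ 0 ∧ (psi a b c q).IsPrimitive ∧
      Associated g ((psi a b c q).map (algebraMap _ K)) := by
    intro g hg q hq hgq
    have hP := psi_prime c h hq
    have hd : (psi a b c q).natDegree ≠ 0 := by
      intro hd
      rw [natDegree_eq_zero] at hd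
      obtain ⟨s, hs⟩ := hd
      have hs0 : s ≠ 0 := by rintro rfl; exact hP.ne_zero (by rw [← hs, C_0])
      rw [← hs, map_C] at hgq
      exact hg.not_isUnit (isUnit_of_dvd_unit hgq
        (isUnit_C.2 (isUnit_iff_ne_zero.2 ((map_ne_zero_iff _ hinj).2 hs0))))
    have hprim := hP.irreducible.isPrimitive hd
    exact ⟨hd, hprim, hg.irreducible.associated_of_dvd
      ((hprim.irreducible_iff_irreducible_map_fraction_map (K := K)).1 hP.irreducible) hgq⟩
  rw [separable_def]
  apply isCoprime_of_prime_dvd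
  · rintro ⟨h1, -⟩
    rw [Polynomial.map_eq_zero_iff hinj, map_eq_zero_iff _ (psi_inj c h)] at h1
    exact hf0 h1
  intro g hg hg1 hg2
  obtain ⟨q, hq, hqf, hgq⟩ := exists_factor c h g hg f hf0 hg1
  obtain ⟨hd, hprim, hass⟩ := key g hg q hq hgq
  obtain ⟨k, rfl⟩ := hqf
  have hk0 : k ≠ 0 := right_ne_zero_of_mul hf0
  rw [map_mul, Polynomial.map_mul, derivative_mul] at hg2
  have hg3 := (dvd_add_left (hgq.mul_right _)).1 hg2
  rcases hg.dvd_or_dvd hg3 with h1 | h1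
  · rw [hass.dvd_iff_dvd_left, derivative_map] at h1
    by_cases h2 : derivative (psi a b c q) = 0
    · exact hd (H q hq (dvd_mul_right _ _) h2)
    · have h3 := natDegree_le_of_dvd h1 ((Polynomial.map_ne_zero_iff hinj).2 h2)
      rw [natDegree_map_eq_of_injective hinj, natDegree_map_eq_of_injective hinj] at h3
      exact absurd (natDegree_derivative_lt hd) (not_lt.2 h3)
  · obtain ⟨r, hr, hrk, hgr⟩ := exists_factor c h g hg k hk0 h1
    obtain ⟨-, hprim', hass'⟩ := key g hg r hr hgr
    have h2 := hprim.dvd_of_fraction_map_dvd_fraction_map (K := K)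
      (hass.symm.trans hass').dvd
    have h3 := (psi_dvd c h h2).trans hrk
    exact hq.not_isUnit (hf q (mul_dvd_mul_left q h3))

lemma natDegree_psi_le (a b c : E[X]) (f : E[X][X]) (D : ℕ)
    (hD : ∀ i, (f.coeff i).natDegree ≤ D) :
    (psi a b c f).natDegree ≤
      max (max a.natDegree b.natDegree) c.natDegree * f.natDegree + D := by
  set M := max (max a.natDegree b.natDegree) c.natDegree with hM
  have hY : (Y a b c).natDegree ≤ M := by
    unfold Y
    refine natDegree_add_le_of_degree_le (natDegree_add_le_of_degree_le ?_ ?_) ?_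
    · exact (natDegree_mul_C_le _ _).trans (natDegree_map_le.trans (by omega))
    · exact (natDegree_mul_C_le _ _).trans (natDegree_map_le.trans (by omega))
    · exact natDegree_map_le.trans (by omega)
  have : psi a b c f = f.sum fun i h => h.map MvPolynomial.C * Y a b c ^ i := by
    simp [psi, eval₂_eq_sum]
  rw [this, Polynomial.sum_def]
  refine natDegree_sum_le_of_forall_le _ _ fun i hi => ?_
  refine natDegree_mul_le.trans ?_
  have h1 : ((f.coeff i).map (MvPolynomial.C (σ := Fin 2))).natDegree ≤ D :=
    natDegree_map_le.trans (hD i)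
  have h2 : (Y a b c ^ i).natDegree ≤ i * M := natDegree_pow_le_of_le i hY
  have h3 : i * M ≤ f.natDegree * M := Nat.mul_le_mul_right _ (le_natDegree_of_mem_supp i hi)
  rw [mul_comm M]
  omega

lemma natDegree_zero_of_lt {S : Type*} [CommRing S] [IsDomain S] (p : ℕ) [CharP S p] (g : S[X])
    (hp : p = 0 ∨ g.natDegree < p) (hg : derivative g = 0) : g.natDegree = 0 := by
  by_contra hn
  obtain ⟨n, hn'⟩ := Nat.exists_eq_succ_of_ne_zero hn
  have h1 := congrArg (fun r => coeff r n) hg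
  simp only [coeff_derivative, coeff_zero] at h1
  have hg0 : g ≠ 0 := by rintro rfl; simp at hn
  have h2 : g.coeff (n + 1) ≠ 0 := by
    rw [← Nat.succ_eq_add_one, ← hn']; exact leadingCoeff_ne_zero.2 hg0
  have h3 := (mul_eq_zero.1 h1).resolve_left h2
  have h4 : ((n + 1 : ℕ) : S) = 0 := by exact_mod_cast h3
  rw [CharP.cast_eq_zero_iff S p] at h4
  rcases hp with rfl | hp
  · simp at h4
  · have := Nat.le_of_dvd (Nat.succ_pos n) h4
    omega

lemma expand_mem (p : ℕ) (g : E[X]) : algebraMap E[X] (RatFunc E) (expand E p g) ∈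
    Subfield.closure (Set.range (RatFunc.C (K := E)) ∪ {RatFunc.X ^ p}) := by
  rw [expand_eq_sum, Polynomial.sum_def, map_sum]
  refine sum_mem fun i _ => ?_
  rw [map_mul, map_pow, map_pow, RatFunc.algebraMap_C, RatFunc.algebraMap_X]
  refine mul_mem ?_ (pow_mem ?_ _)
  · exact Subfield.subset_closure (Or.inl ⟨_, rfl⟩)
  · exact Subfield.subset_closure (Or.inr rfl)

lemma wronskian_ne {a b : E[X]} (hab : IsCoprime a b) (hp : ringChar E ≠ 0) (ha : a ≠ 0)
    (h : notInFtp E a b) : a * derivative b - derivative a * b ≠ 0 := by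
  intro hW
  haveI : CharP E (ringChar E) := ringChar.charP E
  haveI : Fact (ringChar E).Prime := ⟨(CharP.char_is_prime_or_zero E _).resolve_right hp⟩
  have h1 : a ∣ derivative a := by
    refine hab.dvd_of_dvd_mul_right ⟨derivative b, ?_⟩
    linear_combination -hW
  have h2 : derivative a = 0 := by
    by_contra h3
    exact absurd (degree_derivative_lt ha) (not_lt.2 (degree_le_of_dvd h1 h3))
  rw [h2, zero_mul, sub_zero] at hW
  have h3 : derivative b = 0 := (mul_eq_zero.1 hW).resolve_left ha
  apply h
  rw [← expand_contract (ringChar E) h2 hp, ← expand_contract (ringChar E) h3 hp]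
  exact div_mem (expand_mem _ _) (expand_mem _ _)

end LinSub

/-- Let `F` be a field of characteristic `p` (possibly `0`),
`f ∈ F[t][x₁]` square-free over the algebraic closure, `a, b, c ∈ F[t]` with `gcd(a,b) = 1`,
and let `Ψ : F[t][x₁] → F[t][x₁,x₂]` be the `F[t]`-homomorphism `x₁ ↦ a·x₁ + b·x₂ + c`.
If `p = 0` or `p > max(deg a, deg b, deg c)·deg_{x₁} f + deg_t f`, or `a ≠ 0` and
`b/a ∉ F(t^p)`, then `Ψ(f)` is separable in `t`. -/
theorem linear_subst_sepInT (F : Type*) [Field F]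
    (f : Polynomial (Polynomial F))
    (hf : Squarefree
      (Polynomial.map (Polynomial.mapRingHom (algebraMap F (AlgebraicClosure F))) f))
    (a b c : Polynomial F) (hab : IsRelPrime a b)
    (hcond :
      (ringChar F = 0 ∨
        max (max a.natDegree b.natDegree) c.natDegree * f.natDegree + degTP f < ringChar F) ∨
      (a ≠ 0 ∧ notInFtp F a b)) :
    sepInT
      (Polynomial.eval₂ MvPolynomial.C
        (MvPolynomial.C a * MvPolynomial.X 0 + MvPolynomial.C b * MvPolynomial.X 1 +
          MvPolynomial.C c) f : MvPolynomial (Fin 2) (Polynomial F)) := by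
  classical
  obtain ⟨u, v, huv⟩ := hab.isCoprime
  have : CharP F (ringChar F) := ringChar.charP F
  let E := AlgebraicClosure F
  let j : F →+* E := algebraMap F E
  have hj : Function.Injective j := j.injective
  have : CharP E (ringChar F) := charP_of_injective_algebraMap hj _
  let S := MvPolynomial (Fin 2) F
  let T := MvPolynomial (Fin 2) E
  let φ : S →+* FractionRing T := (algebraMap T (FractionRing T)).comp (MvPolynomial.map j)
  have hφ : Function.Injective φ :=
    (IsFractionRing.injective T (FractionRing T)).comp (MvPolynomial.map_injective j hj)
  let ι : FractionRing S →+* FractionRing T := IsFractionRing.lift hφ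
  have hιs : ∀ s, ι (algebraMap S _ s) = φ s := fun s => IsFractionRing.lift_algebraMap hφ s
  have huvE : u.map j * a.map j + v.map j * b.map j = 1 := by
    rw [← Polynomial.map_mul, ← Polynomial.map_mul, ← Polynomial.map_add, huv, Polynomial.map_one]
  have hsep := LinSub.main (c := c.map j) huvE (K := FractionRing T)
    (f.map (Polynomial.mapRingHom j)) hf ?_
  · unfold sepInT
    rw [← Polynomial.separable_map ι]
    let A : Polynomial (Polynomial F) →+* Polynomial (FractionRing T) :=
      (Polynomial.mapRingHom ι).comp ((MvPolynomial.eval₂Hom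
      (Polynomial.mapRingHom
        ((algebraMap (MvPolynomial (Fin 2) F) (FractionRing S)).comp MvPolynomial.C))
      (fun i => Polynomial.C
        (algebraMap (MvPolynomial (Fin 2) F) (FractionRing S)
          (MvPolynomial.X i)))).comp (Polynomial.eval₂RingHom MvPolynomial.C
        (MvPolynomial.C a * MvPolynomial.X 0 + MvPolynomial.C b * MvPolynomial.X 1 +
          MvPolynomial.C c)))
    let B : Polynomial (Polynomial F) →+* Polynomial (FractionRing T) :=
      (Polynomial.mapRingHom (algebraMap T (FractionRing T))).comp
        ((LinSub.psi (a.map j) (b.map j) (c.map j)).comp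
          (Polynomial.mapRingHom (Polynomial.mapRingHom j)))
    have hC : (ι.comp ((algebraMap S (FractionRing S)).comp MvPolynomial.C)) =
        (algebraMap T (FractionRing T)).comp (MvPolynomial.C.comp j) := by
      ext x
      exact (hιs _).trans (congrArg (algebraMap T (FractionRing T)) (MvPolynomial.map_C j x))
    have hC' : ∀ h : Polynomial F, Polynomial.map ι (Polynomial.map
        ((algebraMap S (FractionRing S)).comp MvPolynomial.C) h) =
        Polynomial.map (algebraMap T (FractionRing T)) (Polynomial.map MvPolynomial.C
          (Polynomial.map j h)) := by
      intro h
      rw [Polynomial.map_map, Polynomial.map_map, Polynomial.map_map, hC, RingHom.comp_assoc]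
    have hX : ∀ i, ι (algebraMap S (FractionRing S) (MvPolynomial.X i)) =
        algebraMap T (FractionRing T) (MvPolynomial.X i) := by
      intro i
      exact (hιs _).trans (congrArg (algebraMap T (FractionRing T)) (MvPolynomial.map_X j i))
    have hAB : A = B := by
      apply Polynomial.ringHom_ext
      · intro h
        simpa [A, B] using hC' h
      · have ha := hC' a
        have hb := hC' b
        have hc := hC' c
        have h0 := hX 0
        have h1 := hX 1
        simp only [A, B, RingHom.comp_apply, Polynomial.coe_mapRingHom, Polynomial.map_X,
          LinSub.psi_X, LinSub.Y, Polynomial.coe_eval₂RingHom, Polynomial.eval₂_X,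
          MvPolynomial.coe_eval₂Hom, MvPolynomial.eval₂_add, MvPolynomial.eval₂_mul,
          MvPolynomial.eval₂_C, MvPolynomial.eval₂_X, Polynomial.map_add, Polynomial.map_mul,
          Polynomial.map_C]
        rw [ha, hb, hc, h0, h1]
    have e : A f = B f := congrArg (fun g => g f) hAB
    have hsep' : (B f).Separable := hsep
    rw [← e] at hsep'
    exact hsep'
  · intro q hq hqf hd
    have hcase : (ringChar F = 0 ∨
        max (max a.natDegree b.natDegree) c.natDegree * f.natDegree + degTP f < ringChar F) ∨
        (ringChar F ≠ 0 ∧ a ≠ 0 ∧ notInFtp F a b) := by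
      tauto
    rcases hcase with h1 | ⟨hp, ha, hn⟩
    · refine LinSub.natDegree_zero_of_lt (ringChar F) _ (h1.imp_right fun h2 => ?_) hd
      have hjj : Function.Injective (Polynomial.mapRingHom j) := Polynomial.map_injective j hj
      have h3 := LinSub.natDegree_psi_le (a.map j) (b.map j) (c.map j)
        (f.map (Polynomial.mapRingHom j)) (degTP f) (fun i => by
          rw [Polynomial.coeff_map, Polynomial.coe_mapRingHom, Polynomial.natDegree_map]
          by_cases hi : i ∈ f.support
          · exact Finset.le_sup (f := fun i => (f.coeff i).natDegree) hi
          · simp [Polynomial.notMem_support_iff.1 hi])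
      rw [Polynomial.natDegree_map, Polynomial.natDegree_map, Polynomial.natDegree_map,
        Polynomial.natDegree_map_eq_of_injective hjj] at h3
      have h4 := Polynomial.natDegree_le_of_dvd
        (map_dvd (LinSub.psi (a.map j) (b.map j) (c.map j)) hqf)
        ((map_ne_zero_iff _ (LinSub.psi_inj _ huvE)).2 hf.ne_zero)
      exact (h4.trans h3).trans_lt h2
    · exfalso
      have : Fact (ringChar F).Prime :=
        ⟨(CharP.char_is_prime_or_zero F _).resolve_right hp⟩
      have hW := LinSub.wronskian_ne hab.isCoprime hp ha hn
      have hW' : a.map j * Polynomial.derivative (b.map j)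
          - Polynomial.derivative (a.map j) * b.map j ≠ 0 := by
        rw [Polynomial.derivative_map, Polynomial.derivative_map, ← Polynomial.map_mul,
          ← Polynomial.map_mul, ← Polynomial.map_sub]
        exact (Polynomial.map_ne_zero_iff hj).2 hW
      obtain ⟨h1, h2⟩ := LinSub.deriv_zero _ huvE hW' q hd
      obtain ⟨r, rfl⟩ := LinSub.exists_pow (ringChar F) q h1 h2
      exact hq.irreducible.not_isUnit (by
        have h3 : r * r ∣ r ^ ringChar F := by
          rw [← pow_two]
          exact pow_dvd_pow r (Fact.out : (ringChar F).Prime).two_le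
        exact (hq.irreducible.squarefree r h3).pow _)
end

section
/- For every natural number N there exist constants C(N) and C'(N), depending only on N, with the following property. Let F_q be a finite field with q elements and characteristic p, let d ≥ 1, let f ∈ F_q[t][x₁,…,x_d] be square-free with deg_t f ≤ N and total degree in (x₁,…,x_d) at most N, and let a₁, b₁, c₁, …, a_d, b_d, c_d ∈ F_q[t] with gcd(a_i, b_i) = 1 and deg a_i, deg b_i, deg c_i ≤ N for all i. Assume that either (i) p > C(N), or (ii) for every i = 1,…,d, a_i ≠ 0 and b_i/a_i ∉ F_q(t^p). Then the number of tuples (β₁,…,β_{2d}) ∈ F_q^{2d} such that f(t, a₁(t)β₁ + b₁(t)β_{d+1} + c₁(t), …, a_d(t)β_d + b_d(t)β_{2d} + c_d(t)) is not square-free in F_q[t] is at most C'(N)·q^{2d−1}. In particular, if q > C'(N) there exists such a tuple making the value square-free. -/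
open Polynomial in
/-- Embedding of `F[t]` in `A[t]`, where `A` is the polynomial ring in the `β, γ`. -/
noncomputable def sfLft (F : Type) [Field F] (σ : Type) :
    F[X] →+* (MvPolynomial (σ ⊕ σ) F)[X] := Polynomial.mapRingHom MvPolynomial.C

noncomputable def sfX {F : Type} [Field F] {σ : Type} (a b c : σ → Polynomial F) (i : σ) :
    Polynomial (MvPolynomial (σ ⊕ σ) F) :=
  sfLft F σ (a i) * Polynomial.C (MvPolynomial.X (Sum.inl i)) +
    sfLft F σ (b i) * Polynomial.C (MvPolynomial.X (Sum.inr i)) + sfLft F σ (c i)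

noncomputable def sfPsi {F : Type} [Field F] {σ : Type} (a b c : σ → Polynomial F) :
    MvPolynomial σ (Polynomial F) →+* Polynomial (MvPolynomial (σ ⊕ σ) F) :=
  MvPolynomial.eval₂Hom (sfLft F σ) (sfX a b c)

noncomputable def sfE {F : Type} [Field F] {σ : Type} (a b c u v : σ → Polynomial F) :
    MvPolynomial (σ ⊕ σ) (Polynomial F) →+* Polynomial (MvPolynomial (σ ⊕ σ) F) :=
  MvPolynomial.eval₂Hom (sfLft F σ) (Sum.elim (sfX a b c) (fun i =>
    - sfLft F σ (v i) * Polynomial.C (MvPolynomial.X (Sum.inl i)) +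
    sfLft F σ (u i) * Polynomial.C (MvPolynomial.X (Sum.inr i))))

noncomputable def sfE' {F : Type} [Field F] {σ : Type} (a b c u v : σ → Polynomial F) :
    Polynomial (MvPolynomial (σ ⊕ σ) F) →+* MvPolynomial (σ ⊕ σ) (Polynomial F) :=
  Polynomial.eval₂RingHom
    (MvPolynomial.eval₂Hom (MvPolynomial.C.comp Polynomial.C)
      (Sum.elim
        (fun i => MvPolynomial.C (u i) * (MvPolynomial.X (Sum.inl i) - MvPolynomial.C (c i))
          - MvPolynomial.C (b i) * MvPolynomial.X (Sum.inr i))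
        (fun i => MvPolynomial.C (v i) * (MvPolynomial.X (Sum.inl i) - MvPolynomial.C (c i))
          + MvPolynomial.C (a i) * MvPolynomial.X (Sum.inr i))))
    (MvPolynomial.C Polynomial.X)

section
variable {F : Type} [Field F] {σ : Type} (a b c u v : σ → Polynomial F)

theorem sfE'_lft (r : Polynomial F) : sfE' a b c u v (sfLft F σ r) = MvPolynomial.C r := by
  have : (sfE' a b c u v).comp (sfLft F σ) = MvPolynomial.C := by
    apply Polynomial.ringHom_ext
    · intro x; simp [sfE', sfLft]
    · simp [sfE', sfLft]
  exact DFunLike.congr_fun this r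

theorem sfE'_inl (i : σ) : sfE' a b c u v (Polynomial.C (MvPolynomial.X (Sum.inl i))) =
    MvPolynomial.C (u i) * (MvPolynomial.X (Sum.inl i) - MvPolynomial.C (c i))
          - MvPolynomial.C (b i) * MvPolynomial.X (Sum.inr i) := by
  simp [sfE']

theorem sfE'_inr (i : σ) : sfE' a b c u v (Polynomial.C (MvPolynomial.X (Sum.inr i))) =
    MvPolynomial.C (v i) * (MvPolynomial.X (Sum.inl i) - MvPolynomial.C (c i))
          + MvPolynomial.C (a i) * MvPolynomial.X (Sum.inr i) := by
  simp [sfE']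

theorem sfE_C (r : Polynomial F) : sfE a b c u v (MvPolynomial.C r) = sfLft F σ r := by
  simp [sfE]

theorem sfE'_sfE (h : ∀ i, u i * a i + v i * b i = 1) (P) :
    sfE' a b c u v (sfE a b c u v P) = P := by
  have : (sfE' a b c u v).comp (sfE a b c u v) = RingHom.id _ := by
    apply MvPolynomial.ringHom_ext
    · intro r; simp [sfE_C, sfE'_lft]
    · rintro (i | i)
      · have h' : (MvPolynomial.C (u i) * MvPolynomial.C (a i) +
          MvPolynomial.C (v i) * MvPolynomial.C (b i) : MvPolynomial (σ ⊕ σ) (Polynomial F)) = 1 := by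
          rw [← map_mul, ← map_mul, ← map_add, h, map_one]
        simp only [sfE, sfX, RingHom.comp_apply, MvPolynomial.coe_eval₂Hom, MvPolynomial.eval₂_X,
          Sum.elim_inl, map_add, map_mul, sfE'_lft, sfE'_inl, sfE'_inr, RingHom.id_apply]
        linear_combination (MvPolynomial.X (Sum.inl i) - MvPolynomial.C (c i)) * h'
      · have h' : (MvPolynomial.C (u i) * MvPolynomial.C (a i) +
          MvPolynomial.C (v i) * MvPolynomial.C (b i) : MvPolynomial (σ ⊕ σ) (Polynomial F)) = 1 := by
          rw [← map_mul, ← map_mul, ← map_add, h, map_one]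
        simp only [sfE, sfX, RingHom.comp_apply, MvPolynomial.coe_eval₂Hom, MvPolynomial.eval₂_X,
          Sum.elim_inr, map_add, map_mul, map_neg, sfE'_lft, sfE'_inl, sfE'_inr, RingHom.id_apply]
        linear_combination (MvPolynomial.X (Sum.inr i)) * h'
  exact DFunLike.congr_fun this P

theorem sfE_sfE' (h : ∀ i, u i * a i + v i * b i = 1) (P) :
    sfE a b c u v (sfE' a b c u v P) = P := by
  have : (sfE a b c u v).comp (sfE' a b c u v) = RingHom.id _ := by
    apply Polynomial.ringHom_ext'
    · apply MvPolynomial.ringHom_ext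
      · intro r
        simp [sfE', sfE_C, sfLft]
      · rintro (i | i)
        · have h' : sfLft F σ (u i) * sfLft F σ (a i) + sfLft F σ (v i) * sfLft F σ (b i) = 1 := by
            rw [← map_mul, ← map_mul, ← map_add, h, map_one]
          simp only [RingHom.comp_apply, sfE'_inl, map_sub, map_mul, sfE_C, RingHom.id_apply]
          simp only [sfE, sfX, MvPolynomial.coe_eval₂Hom, MvPolynomial.eval₂_X,
            Sum.elim_inl, Sum.elim_inr]
          linear_combination (Polynomial.C (MvPolynomial.X (Sum.inl i))) * h'
        · have h' : sfLft F σ (u i) * sfLft F σ (a i) + sfLft F σ (v i) * sfLft F σ (b i) = 1 := by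
            rw [← map_mul, ← map_mul, ← map_add, h, map_one]
          simp only [RingHom.comp_apply, sfE'_inr, map_sub, map_add, map_mul, sfE_C, RingHom.id_apply]
          simp only [sfE, sfX, MvPolynomial.coe_eval₂Hom, MvPolynomial.eval₂_X,
            Sum.elim_inl, Sum.elim_inr]
          linear_combination (Polynomial.C (MvPolynomial.X (Sum.inr i))) * h'
    · simp [sfE', sfE_C, sfLft]
  exact DFunLike.congr_fun this P

theorem sfPsi_eq (g : MvPolynomial σ (Polynomial F)) :
    sfPsi a b c g = sfE a b c u v (MvPolynomial.rename Sum.inl g) := by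
  simp only [sfPsi, sfE, MvPolynomial.coe_eval₂Hom, MvPolynomial.eval₂_rename]
  rfl

theorem sfPsi_injective (h : ∀ i, u i * a i + v i * b i = 1) :
    Function.Injective (sfPsi a b c) := by
  intro x y hxy
  rw [sfPsi_eq a b c u v, sfPsi_eq a b c u v] at hxy
  have := congrArg (sfE' a b c u v) hxy
  rw [sfE'_sfE _ _ _ _ _ h, sfE'_sfE _ _ _ _ _ h] at this
  exact MvPolynomial.rename_injective _ Sum.inl_injective this

theorem sfPsi_dvd (h : ∀ i, u i * a i + v i * b i = 1) {f : MvPolynomial σ (Polynomial F)}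
    (hf : f ≠ 0) {P : Polynomial (MvPolynomial (σ ⊕ σ) F)} (hP : P ∣ sfPsi a b c f) :
    ∃ g, P = sfPsi a b c g := by
  classical
  obtain ⟨Q, hQ⟩ := hP
  rw [sfPsi_eq a b c u v] at hQ
  have h1 := congrArg (sfE' a b c u v) hQ
  rw [sfE'_sfE _ _ _ _ _ h, map_mul] at h1
  have h0 : MvPolynomial.rename (Sum.inl : σ → σ ⊕ σ) f ≠ 0 :=
    (map_ne_zero_iff _ (MvPolynomial.rename_injective _ Sum.inl_injective)).2 hf
  have hP0 : sfE' a b c u v P ≠ 0 := by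
    intro h2; rw [h2, zero_mul] at h1; exact h0 h1
  have hQ0 : sfE' a b c u v Q ≠ 0 := by
    intro h2; rw [h2, mul_zero] at h1; exact h0 h1
  obtain ⟨g, hg⟩ := MvPolynomial.exists_rename_eq_of_vars_subset_range (sfE' a b c u v P)
    (Sum.inl : σ → σ ⊕ σ) Sum.inl_injective (by
      rintro (i | i) hi
      · exact ⟨i, rfl⟩
      · exfalso
        have h3 : MvPolynomial.degreeOf (Sum.inr i) (MvPolynomial.rename (Sum.inl : σ → σ ⊕ σ) f) = 0 := by
          by_contra hne
          have := MvPolynomial.vars_rename (Sum.inl : σ → σ ⊕ σ) f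
          have h4 : Sum.inr i ∈ (MvPolynomial.rename (Sum.inl : σ → σ ⊕ σ) f).vars := by
            rw [MvPolynomial.vars_def]
            rw [MvPolynomial.degreeOf_def] at hne
            exact Multiset.mem_toFinset.2 (Multiset.count_ne_zero.1 hne)
          simpa using this h4
        rw [h1, MvPolynomial.degreeOf_mul_eq hP0 hQ0] at h3
        have h5 : MvPolynomial.degreeOf (Sum.inr i) (sfE' a b c u v P) = 0 := by omega
        rw [MvPolynomial.degreeOf_def] at h5
        rw [SetLike.mem_coe, MvPolynomial.vars_def] at hi
        exact (Multiset.count_ne_zero.2 (Multiset.mem_toFinset.1 hi)) h5)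
  refine ⟨g, ?_⟩
  rw [sfPsi_eq a b c u v, hg, sfE_sfE' _ _ _ _ _ h]

theorem sfPsi_squarefree (h : ∀ i, u i * a i + v i * b i = 1) {f : MvPolynomial σ (Polynomial F)}
    (hf : Squarefree f) : Squarefree (sfPsi a b c f) := by
  intro P hP
  have hf0 := hf.ne_zero
  obtain ⟨g, rfl⟩ := sfPsi_dvd a b c u v h hf0 ((Dvd.intro _ rfl).trans hP)
  obtain ⟨Q, hQ⟩ := hP
  obtain ⟨k, rfl⟩ := sfPsi_dvd a b c u v h hf0 (P := Q) ⟨_, hQ.trans (mul_comm _ _)⟩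
  rw [← map_mul, ← map_mul] at hQ
  exact (hf g ⟨k, sfPsi_injective a b c u v h hQ⟩).map _
end

section
variable {F : Type} [Field F]

/-- Coefficientwise partial derivative. -/
noncomputable def sfD {τ : Type} (j : τ) :
    Derivation F (Polynomial (MvPolynomial τ F)) (Polynomial (MvPolynomial τ F)) :=
  (PolynomialModule.equivPolynomialSelf (R := MvPolynomial τ F)).toLinearMap.compDer
    ((MvPolynomial.pderiv j).mapCoeffs)

theorem sfD_coeff {τ : Type} (j : τ) (P : Polynomial (MvPolynomial τ F)) (n : ℕ) :
    (sfD j P).coeff n = MvPolynomial.pderiv j (P.coeff n) := rfl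

theorem sfD_derivative {τ : Type} (j : τ) (P : Polynomial (MvPolynomial τ F)) :
    sfD j (Polynomial.derivative P) = Polynomial.derivative (sfD j P) := by
  ext1 n
  simp only [sfD_coeff, Polynomial.coeff_derivative, Derivation.leibniz]
  have : MvPolynomial.pderiv j ((n : MvPolynomial τ F) + 1) = 0 := by
    simp
  rw [this]; simp [mul_comm]

variable {σ : Type}

theorem sfD_lft (j : σ ⊕ σ) (r : Polynomial F) : sfD j (sfLft F σ r) = 0 := by
  ext1 n
  simp [sfD_coeff, sfLft]

theorem sfD_C (j : σ ⊕ σ) (r : MvPolynomial (σ ⊕ σ) F) :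
    sfD j (Polynomial.C r) = Polynomial.C (MvPolynomial.pderiv j r) := by
  ext1 n
  simp only [sfD_coeff, Polynomial.coeff_C]
  split_ifs <;> simp

theorem sfD_psi (a b c : σ → Polynomial F) (i : σ) (g : MvPolynomial σ (Polynomial F)) :
    sfLft F σ (b i) * sfD (Sum.inl i) (sfPsi a b c g) =
      sfLft F σ (a i) * sfD (Sum.inr i) (sfPsi a b c g) := by
  classical
  induction g using MvPolynomial.induction_on with
  | C r => simp [sfPsi, sfD_lft]
  | add p q hp hq => simp only [map_add, mul_add, hp, hq]
  | mul_X p k hp =>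
    have hX : sfLft F σ (b i) * sfD (Sum.inl i) (sfPsi a b c (MvPolynomial.X k)) =
      sfLft F σ (a i) * sfD (Sum.inr i) (sfPsi a b c (MvPolynomial.X k)) := by
      simp only [sfPsi, MvPolynomial.coe_eval₂Hom, MvPolynomial.eval₂_X, sfX, map_add,
        Derivation.leibniz, sfD_lft, sfD_C, smul_zero, add_zero, smul_eq_mul,
        MvPolynomial.pderiv_X]
      by_cases hk : k = i
      · subst hk; simp [mul_comm]
      · simp [Pi.single_apply, hk, Ne.symm hk]
    simp only [map_mul, Derivation.leibniz, smul_eq_mul]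
    linear_combination sfPsi a b c p * hX + sfPsi a b c (MvPolynomial.X k) * hp

theorem sf_pth_power {τ : Type} [Finite F] (p : ℕ) [Fact p.Prime] [CharP F p]
    (P : Polynomial (MvPolynomial τ F)) (h0 : Polynomial.derivative P = 0)
    (hj : ∀ j, sfD j P = 0) : ∃ Q, P = Q ^ p := by
  have : CharP (MvPolynomial τ F) p := inferInstance
  have : CharP (Polynomial (MvPolynomial τ F)) p := inferInstance
  have hA : ∀ x : MvPolynomial τ F, (∀ j, MvPolynomial.pderiv j x = 0) →
      x ∈ (frobenius (MvPolynomial τ F) p).range := by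
    intro x hx
    rw [x.as_sum]
    refine Subring.sum_mem _ fun s hs => ?_
    have hdiv : ∀ j, p ∣ s j := by
      intro j
      by_contra hnd
      have hpos : s j ≠ 0 := fun h => hnd (h ▸ dvd_zero p)
      have h1 := congrArg (MvPolynomial.coeff (s - Finsupp.single j 1)) (hx j)
      rw [MvPolynomial.coeff_pderiv] at h1
      have h2 : s - Finsupp.single j 1 + Finsupp.single j 1 = s :=
        tsub_add_cancel_of_le (by
          rw [Finsupp.single_le_iff]; omega)
      rw [h2] at h1
      simp only [MvPolynomial.coeff_zero] at h1
      rcases mul_eq_zero.1 h1 with h3 | h3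
      · exact (MvPolynomial.mem_support_iff.1 hs) h3
      · have h4 : ((s j : ℕ) : F) = 0 := by
          rw [← h3]
          have : s j = (s j - 1) + 1 := by omega
          conv_lhs => rw [this]
          simp
        exact hnd ((CharP.cast_eq_zero_iff F p _).1 h4)
    obtain ⟨r, hr⟩ := (PerfectRing.bijective_frobenius (R := F) (p := p)).2 (MvPolynomial.coeff s x)
    refine ⟨MvPolynomial.monomial (s.mapRange (· / p) (by simp)) r, ?_⟩
    rw [frobenius_def, MvPolynomial.monomial_pow]
    change r ^ p = _ at hr
    rw [hr]
    have hs' : p • s.mapRange (· / p) (by simp) = s := by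
      ext j
      simp [Nat.mul_div_cancel' (hdiv j)]
    rw [hs']
  have : P ∈ (frobenius (Polynomial (MvPolynomial τ F)) p).range := by
    rw [P.as_sum_support_C_mul_X_pow]
    refine Subring.sum_mem _ fun n hn => ?_
    refine Subring.mul_mem _ ?_ ?_
    · obtain ⟨r, hr⟩ := hA (P.coeff n) (fun j => by rw [← sfD_coeff, hj j]; simp)
      exact ⟨Polynomial.C r, by rw [← hr]; simp [frobenius_def]⟩
    · have hdiv : p ∣ n := by
        rcases Nat.eq_zero_or_pos n with rfl | hpos
        · exact dvd_zero p
        have h1 := congrArg (fun q => Polynomial.coeff q (n - 1)) h0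
        simp only [Polynomial.coeff_derivative, Polynomial.coeff_zero] at h1
        have h2 : n - 1 + 1 = n := by omega
        rw [h2] at h1
        rcases mul_eq_zero.1 h1 with h3 | h3
        · exact absurd h3 (Polynomial.mem_support_iff.1 hn)
        · apply (CharP.cast_eq_zero_iff (MvPolynomial τ F) p _).1
          rw [← h3]; conv_lhs => rw [← h2]
          simp
      obtain ⟨k, rfl⟩ := hdiv
      exact ⟨Polynomial.X ^ k, by rw [frobenius_def, ← pow_mul, mul_comm]⟩
  obtain ⟨Q, hQ⟩ := this
  exact ⟨Q, by rw [← hQ, frobenius_def]⟩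

/-- Wronskian nonvanishing. -/
theorem sf_wronskian [Finite F] (a b : Polynomial F) (hab : IsCoprime a b)
    (h : notInFtp F a b) :
    a * Polynomial.derivative b - Polynomial.derivative a * b ≠ 0 := by
  intro hw
  have key : ∀ x y : Polynomial F, IsCoprime x y →
      x * Polynomial.derivative y = Polynomial.derivative x * y →
      Polynomial.derivative x = 0 := by
    intro x y hxy he
    have hd : x ∣ Polynomial.derivative x :=
      hxy.dvd_of_dvd_mul_right (Dvd.intro _ he)
    by_contra hne
    have hx : x.natDegree ≠ 0 := fun h0 => hne (by
      rw [Polynomial.eq_C_of_natDegree_eq_zero h0]; simp)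
    have := Polynomial.natDegree_le_of_dvd hd hne
    have := Polynomial.natDegree_derivative_lt hx
    omega
  have ha := key a b hab (by linear_combination hw)
  have hb := key b a hab.symm (by linear_combination -hw)
  have hprime : (ringChar F).Prime := CharP.prime_ringChar F
  have mem : ∀ x : Polynomial F, Polynomial.derivative x = 0 →
      algebraMap (Polynomial F) (RatFunc F) x ∈
        Subfield.closure (Set.range (RatFunc.C (K := F)) ∪ {RatFunc.X ^ ringChar F}) := by
    intro x hx
    have := Fact.mk hprime
    rw [← Polynomial.expand_contract (ringChar F) hx hprime.ne_zero,
      (Polynomial.contract (ringChar F) x).as_sum_support_C_mul_X_pow]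
    simp only [map_sum, map_mul, map_pow, Polynomial.expand_C, Polynomial.expand_X]
    refine sum_mem fun n _ => mul_mem ?_ (pow_mem ?_ _)
    · apply Subfield.subset_closure; left
      exact ⟨_, (RatFunc.algebraMap_C _).symm⟩
    · apply Subfield.subset_closure; right
      simp [RatFunc.algebraMap_X]
  exact h (div_mem (mem b hb) (mem a ha))
end

section
variable {F : Type} [Field F] {σ : Type}

theorem sf_common [Finite F] (a b c u v : σ → Polynomial F)
    (h : ∀ i, u i * a i + v i * b i = 1) {f : MvPolynomial σ (Polynomial F)}
    (hf : Squarefree f)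
    (hcase : (sfPsi a b c f).natDegree < ringChar F ∨
      ∀ i, a i * Polynomial.derivative (b i) - Polynomial.derivative (a i) * b i ≠ 0)
    {P : Polynomial (MvPolynomial (σ ⊕ σ) F)} (hP : Irreducible P)
    (h1 : P ∣ sfPsi a b c f) (h2 : P ∣ Polynomial.derivative (sfPsi a b c f)) :
    P.natDegree = 0 := by
  have hsq := sfPsi_squarefree a b c u v h hf
  have hprime : (ringChar F).Prime := CharP.prime_ringChar F
  have := Fact.mk hprime
  have hd : Polynomial.derivative P = 0 := by
    obtain ⟨Q, hQ⟩ := h1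
    have hPQ : ¬ P ∣ Q := by
      rintro ⟨R, rfl⟩
      exact hP.not_isUnit (hsq P ⟨R, by rw [hQ]; ring⟩)
    have h3 : P ∣ Polynomial.derivative P * Q := by
      rw [hQ, Polynomial.derivative_mul] at h2
      exact (dvd_add_left (Dvd.intro _ rfl)).1 h2
    have h4 : P ∣ Polynomial.derivative P := (hP.prime.dvd_or_dvd h3).resolve_right hPQ
    by_contra hne
    have hx : P.natDegree ≠ 0 := fun h0 => hne (by
      rw [Polynomial.eq_C_of_natDegree_eq_zero h0]; simp)
    have := Polynomial.natDegree_le_of_dvd h4 hne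
    have := Polynomial.natDegree_derivative_lt hx
    omega
  rcases hcase with hcase | hcase
  · by_contra hx
    have h3 := Polynomial.natDegree_le_of_dvd h1 hsq.ne_zero
    have h4 := congrArg (fun q => Polynomial.coeff q (P.natDegree - 1)) hd
    have h2 : P.natDegree - 1 + 1 = P.natDegree := by omega
    simp only [Polynomial.coeff_derivative, Polynomial.coeff_zero, h2] at h4
    rcases mul_eq_zero.1 h4 with h5 | h5
    · exact hP.ne_zero (Polynomial.leadingCoeff_eq_zero.1 h5)
    · have h6 : ((P.natDegree : ℕ) : MvPolynomial (σ ⊕ σ) F) = 0 := by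
        rw [← h5]; conv_lhs => rw [← h2]
        simp
      have := (CharP.cast_eq_zero_iff (MvPolynomial (σ ⊕ σ) F) (ringChar F) _).1 h6
      have := Nat.le_of_dvd (by omega) this
      omega
  · exfalso
    have hD : ∀ i, sfD (Sum.inl i) P = 0 ∧ sfD (Sum.inr i) P = 0 := by
      intro i
      obtain ⟨g, hg⟩ := sfPsi_dvd a b c u v h hf.ne_zero h1
      have e1 := sfD_psi a b c i g
      rw [← hg] at e1
      have dl : ∀ r : Polynomial F, Polynomial.derivative (sfLft F σ r) =
          sfLft F σ (Polynomial.derivative r) := fun r => by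
        simp [sfLft, Polynomial.derivative_map]
      have e2 := congrArg Polynomial.derivative e1
      simp only [Polynomial.derivative_mul, ← sfD_derivative, hd, map_zero, mul_zero,
        add_zero, dl] at e2
      have hw : sfLft F σ (a i) * sfLft F σ (Polynomial.derivative (b i)) -
          sfLft F σ (Polynomial.derivative (a i)) * sfLft F σ (b i) ≠ 0 := by
        rw [← map_mul, ← map_mul, ← map_sub]
        refine (map_ne_zero_iff _ ?_).2 (hcase i)
        exact Polynomial.map_injective _ (MvPolynomial.C_injective _ _)
      constructor
      · refine (mul_eq_zero.1 ?_).resolve_left hw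
        linear_combination sfLft F σ (a i) * e2 - sfLft F σ (Polynomial.derivative (a i)) * e1
      · refine (mul_eq_zero.1 ?_).resolve_left hw
        linear_combination sfLft F σ (b i) * e2 - sfLft F σ (Polynomial.derivative (b i)) * e1
    obtain ⟨Q, hQ⟩ := sf_pth_power (ringChar F) P hd (by
      rintro (i | i)
      exacts [(hD i).1, (hD i).2])
    rw [hQ] at hP
    exact not_irreducible_pow hprime.ne_one hP
end

theorem sf_deg {A : Type} [CommRing A] [IsDomain A] [UniqueFactorizationMonoid A]
    (H : Polynomial A) (G : Polynomial A) (hG : G ≠ 0) :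
    ∀ v : Polynomial A, v ≠ 0 →
    (∀ P, Irreducible P → P ∣ G → P ∣ H → P.natDegree = 0) →
    G ∣ v * H → G.natDegree ≤ v.natDegree := by
  induction G using UniqueFactorizationMonoid.induction_on_prime with
  | h₁ => exact absurd rfl hG
  | h₂ x hx => intro v _ _ _; simp [Polynomial.natDegree_eq_zero_of_isUnit hx]
  | h₃ G P hG0 hP ih =>
    intro v hv hall hdvd
    rw [Polynomial.natDegree_mul hP.ne_zero hG0]
    have hall' : ∀ P, Irreducible P → P ∣ G → P ∣ H → P.natDegree = 0 :=
      fun P' h1 h2 h3 => hall P' h1 (h2.mul_left _) h3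
    by_cases hd : P.natDegree = 0
    · rw [hd, zero_add]
      exact ih hG0 v hv hall' ((Dvd.intro_left _ rfl).trans hdvd)
    · have hPH : ¬ P ∣ H := fun hh => hd (hall P hP.irreducible (Dvd.intro _ rfl) hh)
      have hPv : P ∣ v := (hP.dvd_or_dvd ((Dvd.intro _ rfl).trans hdvd)).resolve_right hPH
      obtain ⟨w, rfl⟩ := hPv
      have hw : w ≠ 0 := right_ne_zero_of_mul hv
      rw [Polynomial.natDegree_mul hP.ne_zero hw]
      have := ih hG0 w hw hall' (by
        rw [mul_assoc] at hdvd
        exact (mul_dvd_mul_iff_left hP.ne_zero).1 hdvd)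
      omega

theorem sf_resultant {A : Type} [CommRing A] [IsDomain A] [UniqueFactorizationMonoid A]
    (G H : Polynomial A) (hG : G ≠ 0) (n : ℕ) (hn : H.natDegree ≤ n)
    (hall : ∀ P, Irreducible P → P ∣ G → P ∣ H → P.natDegree = 0) :
    Polynomial.resultant G H G.natDegree n ≠ 0 := by
  intro h0
  rw [Polynomial.resultant] at h0
  obtain ⟨w, hw0, hw⟩ := Matrix.exists_mulVec_eq_zero_iff.2 h0
  rw [← Polynomial.toMatrix_sylvesterMap' G H le_rfl hn] at hw
  set b₁ := (((Polynomial.degreeLT.basis A G.natDegree).prod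
    (Polynomial.degreeLT.basis A n)).reindex finSumFinEquiv) with hb₁
  obtain ⟨x, hx⟩ : ∃ x, b₁.repr x = Finsupp.equivFunOnFinite.symm w :=
    ⟨b₁.repr.symm _, b₁.repr.apply_symm_apply _⟩
  have hw' : w = b₁.repr x := by rw [hx]; rfl
  rw [hw', LinearMap.toMatrix_mulVec_repr] at hw
  have h1 : Polynomial.sylvesterMap G H le_rfl hn x = 0 := by
    apply (Polynomial.degreeLT.basis A (G.natDegree + n)).repr.injective
    ext i
    simpa using congrFun hw i
  have hx0 : x ≠ 0 := by
    rintro rfl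
    apply hw0; rw [hw']; simp
  obtain ⟨⟨p, hp⟩, ⟨q, hq⟩⟩ := x
  have h2 : G * q + H * p = 0 := by
    simpa using congrArg Subtype.val h1
  rw [Polynomial.mem_degreeLT] at hp
  have hp0 : p ≠ 0 := by
    rintro rfl
    have : q = 0 := by
      rw [mul_zero, add_zero] at h2
      exact (mul_eq_zero.1 h2).resolve_left hG
    subst this
    exact hx0 rfl
  have h3 := sf_deg H G hG p hp0 hall ⟨-q, by linear_combination h2⟩
  have h4 := (Polynomial.natDegree_lt_iff_degree_lt hp0).2 hp
  omega

theorem sf_totalDegree_resultant {F τ : Type} [Field F] (G H : Polynomial (MvPolynomial τ F))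
    (m n N : ℕ) (hG : ∀ k, (G.coeff k).totalDegree ≤ N) (hH : ∀ k, (H.coeff k).totalDegree ≤ N) :
    (Polynomial.resultant G H m n).totalDegree ≤ (m + n) * N := by
  rw [Polynomial.resultant, Matrix.det_apply]
  refine MvPolynomial.totalDegree_finsetSum_le fun s _ => ?_
  have h1 : (∏ i, Polynomial.sylvester G H m n (s i) i).totalDegree ≤ (m + n) * N := by
    refine (MvPolynomial.totalDegree_finsetProd _ _).trans ?_
    refine (Finset.sum_le_card_nsmul _ _ N fun i _ => ?_).trans (by simp)
    generalize s i = j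
    induction i using Fin.addCases <;> simp only [Polynomial.sylvester, Matrix.of_apply,
      Fin.addCases_left, Fin.addCases_right] <;> split_ifs <;> simp [hG, hH]
  rcases Int.units_eq_one_or (Equiv.Perm.sign s) with h | h <;> rw [h]
  · simpa using h1
  · simpa using h1

theorem sf_zippel {F τ : Type} [Field F] [Fintype F] [Fintype τ] (R : MvPolynomial τ F)
    (hR : R ≠ 0) (D : ℕ) (hD : R.totalDegree ≤ D) (hτ : 0 < Fintype.card τ) :
    Set.ncard {x : τ → F | MvPolynomial.eval x R = 0} ≤
      D * Fintype.card F ^ (Fintype.card τ - 1) := by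
  classical
  let e := Fintype.equivFin τ
  let R' := MvPolynomial.renameEquiv F e R
  have hR' : R' ≠ 0 := (map_ne_zero_iff _ (MvPolynomial.renameEquiv F e).injective).2 hR
  have hz := MvPolynomial.schwartz_zippel_totalDegree hR' (Finset.univ : Finset F)
  have hdeg : R'.totalDegree = R.totalDegree := MvPolynomial.totalDegree_renameEquiv e R
  have hcard : Set.ncard {x : τ → F | MvPolynomial.eval x R = 0} =
      (Finset.filter (fun f => MvPolynomial.eval f R' = 0)
        (Fintype.piFinset fun _ : Fin (Fintype.card τ) => (Finset.univ : Finset F))).card := by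
    rw [← Set.ncard_coe_finset]
    refine Set.ncard_congr (fun x _ => x ∘ e.symm) ?_ ?_ ?_
    · intro x hx
      simp only [Set.mem_ofPred_eq] at hx
      simp [R', MvPolynomial.eval_rename, Function.comp_assoc, hx]
    · intro x y _ _ hxy
      exact e.symm.surjective.injective_comp_right hxy
    · intro y hy
      refine ⟨y ∘ e, ?_, ?_⟩
      · simpa [R', MvPolynomial.eval_rename] using hy
      · simp [Function.comp_assoc]
  rw [hcard]
  have hq : (0 : ℚ≥0) < (Finset.univ : Finset F).card := by
    simp [Finset.card_univ, Fintype.card_pos]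
  rw [div_le_div_iff₀ (by positivity) hq, hdeg] at hz
  have hz' := (show (_ : ℕ) ≤ _ by exact_mod_cast hz :
    (Finset.filter (fun f => MvPolynomial.eval f R' = 0)
        (Fintype.piFinset fun _ : Fin (Fintype.card τ) => (Finset.univ : Finset F))).card *
        (Finset.univ : Finset F).card ≤ R.totalDegree * (Finset.univ : Finset F).card ^ Fintype.card τ)
  rw [Finset.card_univ] at hz'
  obtain ⟨k, hk⟩ : ∃ k, Fintype.card τ = k + 1 := ⟨Fintype.card τ - 1, by omega⟩
  have : Fintype.card F ^ Fintype.card τ = Fintype.card F ^ (Fintype.card τ - 1) * Fintype.card F := by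
    rw [hk]; simp [pow_succ]
  rw [this, ← mul_assoc] at hz'
  exact (Nat.le_of_mul_le_mul_right hz' Fintype.card_pos).trans (Nat.mul_le_mul_right _ hD)

/-- Bidegree bound. -/
def sfB {F τ : Type} [Field F] (m k : ℕ) (P : Polynomial (MvPolynomial τ F)) : Prop :=
  (∀ j, (P.coeff j).totalDegree ≤ m) ∧ P.natDegree ≤ k

section
variable {F τ : Type} [Field F]

theorem sfB_mono {m k m' k' : ℕ} {P : Polynomial (MvPolynomial τ F)} (h : sfB m k P)
    (hm : m ≤ m') (hk : k ≤ k') : sfB m' k' P :=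
  ⟨fun j => (h.1 j).trans hm, h.2.trans hk⟩

theorem sfB_mul {m k m' k' : ℕ} {P Q : Polynomial (MvPolynomial τ F)} (h : sfB m k P)
    (h' : sfB m' k' Q) : sfB (m + m') (k + k') (P * Q) := by
  refine ⟨fun j => ?_, Polynomial.natDegree_mul_le.trans (add_le_add h.2 h'.2)⟩
  rw [Polynomial.coeff_mul]
  exact MvPolynomial.totalDegree_finsetSum_le fun x _ =>
    (MvPolynomial.totalDegree_mul _ _).trans (add_le_add (h.1 _) (h'.1 _))

theorem sfB_add {m k : ℕ} {P Q : Polynomial (MvPolynomial τ F)} (h : sfB m k P)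
    (h' : sfB m k Q) : sfB m k (P + Q) := by
  refine ⟨fun j => ?_, Polynomial.natDegree_add_le_of_degree_le h.2 h'.2⟩
  rw [Polynomial.coeff_add]
  exact (MvPolynomial.totalDegree_add _ _).trans (max_le (h.1 _) (h'.1 _))

theorem sfB_one : sfB 0 0 (1 : Polynomial (MvPolynomial τ F)) := by
  refine ⟨fun j => ?_, by simp⟩
  rw [Polynomial.coeff_one]; split_ifs <;> simp

theorem sfB_zero (m k : ℕ) : sfB m k (0 : Polynomial (MvPolynomial τ F)) := by
  refine ⟨fun j => ?_, by simp⟩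
  simp

theorem sfB_sum {ι : Type} (s : Finset ι) (g : ι → Polynomial (MvPolynomial τ F)) (m k : ℕ)
    (h : ∀ i ∈ s, sfB m k (g i)) : sfB m k (∑ i ∈ s, g i) :=
  Finset.sum_induction g (sfB m k) (fun _ _ => sfB_add) (sfB_zero m k) h

theorem sfB_pow {m k : ℕ} {P : Polynomial (MvPolynomial τ F)} (h : sfB m k P) (n : ℕ) :
    sfB (n * m) (n * k) (P ^ n) := by
  induction n with
  | zero => simpa using sfB_one
  | succ n ih => rw [pow_succ, add_mul, add_mul, one_mul, one_mul]; exact sfB_mul ih h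

theorem sfB_prod {ι : Type} (s : Finset ι) (g : ι → Polynomial (MvPolynomial τ F)) (m k : ι → ℕ)
    (h : ∀ i ∈ s, sfB (m i) (k i) (g i)) :
    sfB (∑ i ∈ s, m i) (∑ i ∈ s, k i) (∏ i ∈ s, g i) := by
  classical
  induction s using Finset.induction_on with
  | empty => simpa using sfB_one
  | insert i s hi ih =>
    rw [Finset.sum_insert hi, Finset.sum_insert hi, Finset.prod_insert hi]
    exact sfB_mul (h i (by simp)) (ih fun j hj => h j (by simp [hj]))

theorem sfB_psi {σ : Type} (a b c : σ → Polynomial F) (f : MvPolynomial σ (Polynomial F)) (N : ℕ)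
    (hf : f.totalDegree ≤ N) (hft : ∀ s, (f.coeff s).natDegree ≤ N)
    (hdeg : ∀ i, (a i).natDegree ≤ N ∧ (b i).natDegree ≤ N ∧ (c i).natDegree ≤ N) :
    sfB N (N + N * N) (sfPsi a b c f) := by
  have hl : ∀ r : Polynomial F, r.natDegree ≤ N → sfB 0 N (sfLft F σ r) := by
    intro r hr
    refine ⟨fun j => by simp [sfLft], ?_⟩
    exact Polynomial.natDegree_map_le.trans hr
  have hX : ∀ j : σ ⊕ σ, sfB 1 0 (Polynomial.C (MvPolynomial.X j : MvPolynomial (σ ⊕ σ) F)) := by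
    intro j
    refine ⟨fun k => ?_, by simp⟩
    rw [Polynomial.coeff_C]; split_ifs <;> simp
  have hx : ∀ i, sfB 1 N (sfX a b c i) := fun i =>
    sfB_add (sfB_add (sfB_mono (sfB_mul (hl _ (hdeg i).1) (hX _)) (by simp) (by simp))
      (sfB_mono (sfB_mul (hl _ (hdeg i).2.1) (hX _)) (by simp) (by simp)))
      (sfB_mono (hl _ (hdeg i).2.2) (by simp) le_rfl)
  rw [sfPsi, MvPolynomial.coe_eval₂Hom, MvPolynomial.eval₂_eq]
  refine sfB_sum _ _ _ _ fun s hs => ?_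
  have hs' : ∑ i ∈ s.support, s i ≤ N := (MvPolynomial.le_totalDegree hs).trans hf
  refine sfB_mono (sfB_mul (hl _ (hft s)) (sfB_prod s.support _ (fun i => s i * 1)
    (fun i => s i * N) fun i _ => sfB_pow (hx i) (s i))) ?_ ?_
  · simpa using hs'
  · rw [← Finset.sum_mul]
    exact Nat.add_le_add_left (Nat.mul_le_mul_right _ hs') _
end

/-- For every `N` there are constants `C N`, `C' N` such that for every
finite field `F_q` of characteristic `p`, every `d ≥ 1`, every square-free
`f ∈ F_q[t][x₁,…,x_d]` with `deg_t f ≤ N` and total `x`-degree at most `N`, and all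
`a_i, b_i, c_i ∈ F_q[t]` of degree at most `N` with `gcd(a_i, b_i) = 1`, if `p > C N` or for
every `i` we have `a_i ≠ 0` and `b_i/a_i ∉ F_q(t^p)`, then the number of tuples
`(β, γ) ∈ F_q^d × F_q^d` with `f(t, a₁β₁ + b₁γ₁ + c₁, …)` not square-free is at most
`C' N · q^{2d−1}`; in particular if `q > C' N` some tuple makes the value square-free. -/
theorem squarefree_values_multivariate_linear_sparse (N : ℕ) :
    ∃ C C' : ℕ, ∀ (F : Type) [Field F] [Fintype F] (d : ℕ),
      1 ≤ d →
      ∀ (f : MvPolynomial (Fin d) (Polynomial F)) (a b c : Fin d → Polynomial F),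
        Squarefree f →
        f.totalDegree ≤ N → (∀ s, (f.coeff s).natDegree ≤ N) →
        (∀ i, IsRelPrime (a i) (b i)) →
        (∀ i, (a i).natDegree ≤ N ∧ (b i).natDegree ≤ N ∧ (c i).natDegree ≤ N) →
        (C < ringChar F ∨ (∀ i, a i ≠ 0 ∧ notInFtp F (a i) (b i))) →
        Set.ncard {βγ : (Fin d → F) × (Fin d → F) |
            ¬ Squarefree (MvPolynomial.eval
              (fun i => a i * Polynomial.C (βγ.1 i) + b i * Polynomial.C (βγ.2 i) + c i) f)}
            ≤ C' * Fintype.card F ^ (2 * d - 1) ∧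
        (C' < Fintype.card F →
          ∃ β γ : Fin d → F,
            Squarefree (MvPolynomial.eval
              (fun i => a i * Polynomial.C (β i) + b i * Polynomial.C (γ i) + c i) f)) := by
  refine ⟨N + N * N, (2 * (N + N * N) + 1) * N, ?_⟩
  intro F _ _ d hd f a b c hf hfN hft hab hdeg hcase
  have hcop : ∀ i, IsCoprime (a i) (b i) := fun i => (hab i).isCoprime
  choose u v huv using hcop
  have hB := sfB_psi a b c f N hfN hft hdeg
  set G := sfPsi a b c f with hGdef
  have hG0 : G ≠ 0 := (sfPsi_squarefree a b c u v huv hf).ne_zero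
  have hcase' : G.natDegree < ringChar F ∨
      ∀ i, a i * Polynomial.derivative (b i) - Polynomial.derivative (a i) * b i ≠ 0 := by
    rcases hcase with h | h
    · exact Or.inl (hB.2.trans_lt h)
    · exact Or.inr fun i => sf_wronskian _ _ (hab i).isCoprime (h i).2
  have hdle : (Polynomial.derivative G).natDegree ≤ G.natDegree + 1 :=
    (Polynomial.natDegree_derivative_le G).trans (by omega)
  have hR0 := sf_resultant G (Polynomial.derivative G) hG0 (G.natDegree + 1) hdle
    (fun P hP h1 h2 => sf_common a b c u v huv hf hcase' hP h1 h2)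
  set R := Polynomial.resultant G (Polynomial.derivative G) G.natDegree (G.natDegree + 1) with hRdef
  have hRdeg : R.totalDegree ≤ (2 * (N + N * N) + 1) * N := by
    refine (sf_totalDegree_resultant _ _ _ _ N hB.1 fun k => ?_).trans
      (Nat.mul_le_mul_right _ (by have := hB.2; omega))
    rw [Polynomial.coeff_derivative]
    refine (MvPolynomial.totalDegree_mul _ _).trans ?_
    have h1 : ((k : MvPolynomial (Fin d ⊕ Fin d) F) + 1).totalDegree = 0 := by
      have : ((k : MvPolynomial (Fin d ⊕ Fin d) F) + 1) = MvPolynomial.C ((k : F) + 1) := by simp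
      rw [this, MvPolynomial.totalDegree_C]
    rw [h1, add_zero]
    exact hB.1 _
  have hz := sf_zippel R hR0 _ hRdeg (by simp; omega)
  -- specialization
  have hspec : ∀ x : Fin d ⊕ Fin d → F, MvPolynomial.eval x R ≠ 0 →
      Squarefree (MvPolynomial.eval (fun i => a i * Polynomial.C (x (Sum.inl i)) +
        b i * Polynomial.C (x (Sum.inr i)) + c i) f) := by
    intro x hx
    have hmap : MvPolynomial.eval (fun i => a i * Polynomial.C (x (Sum.inl i)) +
        b i * Polynomial.C (x (Sum.inr i)) + c i) f = G.map (MvPolynomial.eval x) := by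
      have hl : ∀ r : Polynomial F, (sfLft F (Fin d) r).map (MvPolynomial.eval x) = r := by
        intro r
        rw [sfLft, Polynomial.coe_mapRingHom, Polynomial.map_map]
        have : (MvPolynomial.eval x).comp MvPolynomial.C = RingHom.id F := by
          ext y; simp
        rw [this, Polynomial.map_id]
      have : (Polynomial.mapRingHom (MvPolynomial.eval x)).comp (sfPsi a b c) =
          MvPolynomial.eval (fun i => a i * Polynomial.C (x (Sum.inl i)) +
        b i * Polynomial.C (x (Sum.inr i)) + c i) := by
        apply MvPolynomial.ringHom_ext
        · intro r; simp [sfPsi, hl]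
        · intro i; simp [sfPsi, sfX, hl]
      rw [← this]; rfl
    rw [hmap]
    obtain ⟨p, q, -, -, hpq⟩ := Polynomial.exists_mul_add_mul_eq_C_resultant
      G (Polynomial.derivative G) le_rfl hdle (Or.inr (by omega))
    have h1 := congrArg (Polynomial.map (MvPolynomial.eval x)) hpq
    rw [Polynomial.map_add, Polynomial.map_mul, Polynomial.map_mul, Polynomial.map_C,
      ← Polynomial.derivative_map, ← hRdef] at h1
    refine Polynomial.Separable.squarefree ?_
    refine ⟨Polynomial.C (MvPolynomial.eval x R)⁻¹ * p.map (MvPolynomial.eval x),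
      Polynomial.C (MvPolynomial.eval x R)⁻¹ * q.map (MvPolynomial.eval x), ?_⟩
    have h2 : Polynomial.C (MvPolynomial.eval x R)⁻¹ * Polynomial.C (MvPolynomial.eval x R) = 1 := by
      rw [← Polynomial.C_mul, inv_mul_cancel₀ hx, Polynomial.C_1]
    linear_combination Polynomial.C (MvPolynomial.eval x R)⁻¹ * h1 + h2
  have hbound : Set.ncard {βγ : (Fin d → F) × (Fin d → F) |
            ¬ Squarefree (MvPolynomial.eval
              (fun i => a i * Polynomial.C (βγ.1 i) + b i * Polynomial.C (βγ.2 i) + c i) f)}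
            ≤ (2 * (N + N * N) + 1) * N * Fintype.card F ^ (2 * d - 1) := by
    have hc : Fintype.card (Fin d ⊕ Fin d) = 2 * d := by simp; omega
    rw [hc] at hz
    refine le_trans ?_ hz
    refine Set.ncard_le_ncard_of_injOn (fun βγ => Sum.elim βγ.1 βγ.2) ?_ ?_ (Set.toFinite _)
    · intro βγ h
      rw [Set.mem_ofPred_eq] at h ⊢
      by_contra hne
      have h3 := hspec (Sum.elim βγ.1 βγ.2) hne
      simp only [Sum.elim_inl, Sum.elim_inr] at h3
      exact h h3
    · rintro ⟨x, y⟩ _ ⟨x', y'⟩ _ h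
      have h' : Sum.elim x y = Sum.elim x' y' := h
      ext i
      · exact congrFun h' (Sum.inl i)
      · exact congrFun h' (Sum.inr i)
  refine ⟨hbound, fun hq => ?_⟩
  by_contra hno
  push Not at hno
  have huniv : {βγ : (Fin d → F) × (Fin d → F) |
            ¬ Squarefree (MvPolynomial.eval
              (fun i => a i * Polynomial.C (βγ.1 i) + b i * Polynomial.C (βγ.2 i) + c i) f)}
            = Set.univ := Set.eq_univ_of_forall fun βγ => hno βγ.1 βγ.2
  rw [huniv, Set.ncard_univ, Nat.card_eq_fintype_card] at hbound
  have hcard : Fintype.card ((Fin d → F) × (Fin d → F)) =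
      Fintype.card F * Fintype.card F ^ (2 * d - 1) := by
    rw [Fintype.card_prod, Fintype.card_fun, Fintype.card_fin, ← pow_add, ← pow_succ']
    congr 1; omega
  rw [hcard] at hbound
  have hpos : 0 < Fintype.card F ^ (2 * d - 1) := pow_pos Fintype.card_pos _
  exact absurd (Nat.le_of_mul_le_mul_right hbound hpos) (by omega)
end

section
/- Let F be a field of characteristic p (possibly 0) with algebraic closure F̄, and let N ∈ ℕ. There exist constants C(N) and C'(N), depending only on N, with the following property. Let f ∈ F[t][x₁,…,x_d] be square-free as an element of F̄[t][x₁,…,x_d], and let a₁, b₁, c₁, …, a_d, b_d, c_d ∈ F[t] with gcd(a_i, b_i) = 1 for all i, deg_t f ≤ N, total degree of f in (x₁,…,x_d) at most N, and deg a_i, deg b_i, deg c_i ≤ N for all i. Then there exists P ∈ F[x₁,…,x_{2d}] of total degree at most C'(N) such that every (β₁,…,β_{2d}) ∈ F^{2d} for which f(t, a₁(t)β₁ + b₁(t)β_{d+1} + c₁(t), …, a_d(t)β_d + b_d(t)β_{2d} + c_d(t)) is not separable satisfies P(β₁,…,β_{2d}) = 0. Moreover, P can be chosen nonzero whenever at least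 one of the following holds: (i) p = 0 or p > C(N); (ii) for every i, a_i ≠ 0 and b_i/a_i ∉ F(t^p). -/
section helpers
open Polynomial

/-- A common prime factor of positive degree. -/
lemma aux_exists_prime {A : Type*} [CommRing A] [IsDomain A] [UniqueFactorizationMonoid A]
    (g g' : A[X]) (hg : g ≠ 0) (hr : g.resultant g' = 0) :
    ∃ h : A[X], Prime h ∧ h.natDegree ≠ 0 ∧ h ∣ g ∧ h ∣ g' := by
  classical
  let _ : NormalizedGCDMonoid A :=
    Classical.choice (inferInstance : Nonempty (NormalizedGCDMonoid A))
  let K := FractionRing A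
  have hinj : Function.Injective (algebraMap A K) := IsFractionRing.injective A K
  have h1 : (g.map (algebraMap A K)).resultant (g'.map (algebraMap A K)) = 0 := by
    rw [natDegree_map_eq_of_injective hinj, natDegree_map_eq_of_injective hinj,
      resultant_map_map, hr, map_zero]
  rw [resultant_eq_zero_iff] at h1
  obtain ⟨h0, hnc⟩ := h1
  have : ∃ z : K[X], Irreducible z ∧ z ∣ g.map (algebraMap A K) ∧ z ∣ g'.map (algebraMap A K) := by
    by_contra hcon
    push Not at hcon
    apply hnc
    exact isCoprime_of_irreducible_dvd (by tauto) hcon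
  obtain ⟨z, hz, hzg, hzg'⟩ := this
  obtain ⟨s, hs, hsg⟩ := UniqueFactorizationMonoid.exists_prime_factors g hg
  have hzs : z ∣ (s.map (Polynomial.mapRingHom (algebraMap A K))).prod := by
    rw [← map_multiset_prod]
    obtain ⟨u, hu⟩ := hsg
    rw [← hu] at hzg
    rw [Polynomial.map_mul] at hzg
    have hu' : IsUnit ((u : A[X]).map (algebraMap A K)) :=
      (u.isUnit).map (Polynomial.mapRingHom (algebraMap A K))
    exact (hu'.dvd_mul_right).1 hzg
  obtain ⟨q', hq', hzq⟩ := Prime.exists_mem_multiset_dvd hz.prime hzs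
  obtain ⟨q, hq, rfl⟩ := Multiset.mem_map.1 hq'
  have hqp := hs q hq
  have hdeg : q.natDegree ≠ 0 := by
    intro h
    obtain ⟨r, rfl⟩ := natDegree_eq_zero.1 h
    have hr0 : r ≠ 0 := by rintro rfl; exact hqp.ne_zero (by simp)
    apply hz.not_isUnit
    apply isUnit_of_dvd_unit hzq
    simp only [coe_mapRingHom, map_C]
    exact isUnit_C.2 (IsUnit.mk0 _ (by simpa using hr0))
  have hprim : q.IsPrimitive := hqp.irreducible.isPrimitive hdeg
  have hqi := (hprim.irreducible_iff_irreducible_map_fraction_map (K := K)).1 hqp.irreducible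
  refine ⟨q, hqp, hdeg, ?_, ?_⟩
  · exact (Multiset.dvd_prod hq).trans hsg.dvd
  · apply hprim.dvd_of_fraction_map_dvd_fraction_map (K := K)
    exact (hz.associated_of_dvd hqi hzq).symm.dvd.trans hzg'

/-- Degree zero derivative of a common prime. -/
lemma aux_deriv_zero {A : Type*} [CommRing A] [IsDomain A]
    (g h : A[X]) (hp : Prime h) (h1 : h ∣ g) (h2 : h ∣ derivative g) (h3 : ¬ h * h ∣ g) :
    derivative h = 0 := by
  obtain ⟨q, rfl⟩ := h1
  rw [derivative_mul] at h2
  have h4 : h ∣ derivative h * q := (dvd_add_left (dvd_mul_right _ _)).1 h2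
  rcases hp.dvd_or_dvd h4 with h5 | h5
  · by_contra hne
    have hd : h.natDegree ≠ 0 := by
      intro h
      apply hne
      rw [natDegree_eq_zero] at h
      obtain ⟨r, rfl⟩ := h
      simp
    have := natDegree_le_of_dvd h5 hne
    have := natDegree_derivative_lt hd
    omega
  · exact absurd (mul_dvd_mul_left h h5) h3

lemma aux_totalDegree_resultant {σ F : Type*} [Field F] (g g' : (MvPolynomial σ F)[X])
    (n M : ℕ) (hg : ∀ k, (g.coeff k).totalDegree ≤ n) (hg' : ∀ k, (g'.coeff k).totalDegree ≤ n)
    (hM : g.natDegree + g'.natDegree ≤ M) :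
    (g.resultant g').totalDegree ≤ M * n := by
  classical
  rw [resultant, Matrix.det_apply]
  apply MvPolynomial.totalDegree_finsetSum_le
  intro s _
  rw [Units.smul_def]
  refine (MvPolynomial.totalDegree_smul_le _ _).trans ?_
  refine (MvPolynomial.totalDegree_finsetProd _ _).trans ?_
  refine (Finset.sum_le_card_nsmul _ _ n ?_).trans ?_
  · intro i _
    rw [sylvester, Matrix.of_apply]
    induction i using Fin.addCases with
    | left i => simp only [Fin.addCases_left]; split_ifs <;> simp [hg']
    | right i => simp only [Fin.addCases_right]; split_ifs <;> simp [hg]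
  · simpa using Nat.mul_le_mul_right n hM

/-- The weight predicate. -/
def auxW {σ F : Type*} [Field F] (n : ℕ) (g : (MvPolynomial σ F)[X]) : Prop :=
  ∀ k, (g.coeff k).totalDegree ≤ n

lemma auxW.mono {σ F : Type*} [Field F] {n m : ℕ} {g : (MvPolynomial σ F)[X]} (h : auxW n g)
    (hnm : n ≤ m) : auxW m g := fun k => (h k).trans hnm

lemma auxW.add {σ F : Type*} [Field F] {n : ℕ} {g g' : (MvPolynomial σ F)[X]} (h : auxW n g)
    (h' : auxW n g') : auxW n (g + g') := fun k => by
  rw [coeff_add]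
  exact (MvPolynomial.totalDegree_add _ _).trans (max_le (h k) (h' k))

lemma auxW.mul {σ F : Type*} [Field F] {n m : ℕ} {g g' : (MvPolynomial σ F)[X]} (h : auxW n g)
    (h' : auxW m g') : auxW (n + m) (g * g') := fun k => by
  rw [coeff_mul]
  apply MvPolynomial.totalDegree_finsetSum_le
  intro x _
  exact (MvPolynomial.totalDegree_mul _ _).trans (add_le_add (h _) (h' _))

lemma auxW.one {σ F : Type*} [Field F] : auxW 0 (1 : (MvPolynomial σ F)[X]) := fun k => by
  rw [coeff_one]; split_ifs <;> simp

lemma auxW.pow {σ F : Type*} [Field F] {n : ℕ} {g : (MvPolynomial σ F)[X]} (h : auxW n g)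
    (k : ℕ) : auxW (k * n) (g ^ k) := by
  induction k with
  | zero => simpa using auxW.one
  | succ k ih => rw [pow_succ, Nat.succ_mul]; exact ih.mul h

lemma auxW.prod {σ F ι : Type*} [Field F] (s : Finset ι) (n : ι → ℕ)
    (g : ι → (MvPolynomial σ F)[X]) (h : ∀ i ∈ s, auxW (n i) (g i)) :
    auxW (∑ i ∈ s, n i) (∏ i ∈ s, g i) := by
  classical
  induction s using Finset.induction_on with
  | empty => simpa using auxW.one
  | insert a s ha ih =>
    rw [Finset.sum_insert ha, Finset.prod_insert ha]
    exact (h a (by simp)).mul (ih fun i hi => h i (by simp [hi]))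

lemma auxW.sum {σ F ι : Type*} [Field F] (s : Finset ι) (n : ℕ)
    (g : ι → (MvPolynomial σ F)[X]) (h : ∀ i ∈ s, auxW n (g i)) :
    auxW n (∑ i ∈ s, g i) := by
  intro k
  rw [finsetSum_coeff]
  exact MvPolynomial.totalDegree_finsetSum_le fun i hi => h i hi k

lemma auxW.derivative {σ F : Type*} [Field F] {n : ℕ} {g : (MvPolynomial σ F)[X]} (h : auxW n g) :
    auxW n (derivative g) := fun k => by
  rw [coeff_derivative]
  have := MvPolynomial.totalDegree_mul (g.coeff (k+1)) ((k : MvPolynomial σ F) + 1)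
  refine this.trans ?_
  have h2 : ((k : MvPolynomial σ F) + 1).totalDegree = 0 := by
    have : ((k : MvPolynomial σ F) + 1) = MvPolynomial.C ((k : F) + 1) := by simp
    rw [this, MvPolynomial.totalDegree_C]
  rw [h2]; exact h _

lemma auxW.map {σ F : Type*} [Field F] (r : F[X]) :
    auxW 0 (r.map (MvPolynomial.C : F →+* MvPolynomial σ F)) := fun k => by
  rw [coeff_map]; simp

lemma auxW.C {σ F : Type*} [Field F] (r : MvPolynomial σ F) :
    auxW r.totalDegree (Polynomial.C r) := fun k => by
  rw [coeff_C]; split_ifs <;> simp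

/-- divisors of renamed polynomials -/
lemma aux_dvd_rename {σ τ R : Type*} [CommRing R] [IsDomain R] (f : MvPolynomial σ R) (hf : f ≠ 0)
    (s : MvPolynomial (σ ⊕ τ) R) (hs : s ∣ MvPolynomial.rename Sum.inl f) :
    ∃ s0, MvPolynomial.rename Sum.inl s0 = s := by
  classical
  have hinj : Function.Injective (Sum.inl : σ → σ ⊕ τ) := Sum.inl_injective
  apply MvPolynomial.exists_rename_eq_of_vars_subset_range s _ hinj
  obtain ⟨q, hq⟩ := hs
  have hne : MvPolynomial.rename (Sum.inl : σ → σ ⊕ τ) f ≠ 0 := by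
    rw [Ne, ← map_zero (MvPolynomial.rename (Sum.inl : σ → σ ⊕ τ)),
      (MvPolynomial.rename_injective _ hinj).eq_iff]
    exact hf
  rw [hq] at hne
  intro i hi
  rcases i with i | i
  · exact ⟨i, rfl⟩
  exfalso
  have h1 := MvPolynomial.degreeOf_mul_eq (n := Sum.inr i) (left_ne_zero_of_mul hne)
    (right_ne_zero_of_mul hne)
  rw [← hq] at h1
  have h2 : MvPolynomial.degreeOf (Sum.inr i : σ ⊕ τ) (MvPolynomial.rename Sum.inl f) = 0 := by
    by_contra h
    rw [← Ne, ← MvPolynomial.mem_vars_iff_degreeOf_ne_zero] at h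
    have := MvPolynomial.vars_rename _ _ h
    simp at this
  have h3 : MvPolynomial.degreeOf (Sum.inr i : σ ⊕ τ) s = 0 := by omega
  exact MvPolynomial.mem_vars_iff_degreeOf_ne_zero.1 hi h3

lemma aux_isUnit_map {σ F E : Type*} [Field F] [Field E] (e : F →+* E)
    (h : MvPolynomial σ F[X])
    (hu : IsUnit (MvPolynomial.map (Polynomial.mapRingHom e) h)) : IsUnit h := by
  rw [MvPolynomial.isUnit_iff] at hu ⊢
  refine ⟨?_, fun i hi => ?_⟩
  · have := hu.1
    rw [MvPolynomial.coeff_map] at this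
    exact (Polynomial.isUnit_map e).1 this
  · have := hu.2 i hi
    rw [isNilpotent_iff_eq_zero, MvPolynomial.coeff_map] at this
    rw [isNilpotent_iff_eq_zero]
    exact (Polynomial.map_eq_zero e).1 this

lemma aux_dvd_of_deriv {F : Type*} [Field F] (r : F[X]) (h : derivative r = 0) (n : ℕ)
    (hn : r.coeff n ≠ 0) : ringChar F ∣ n := by
  rcases n with _ | n
  · simp
  have := congrArg (fun q => coeff q n) h
  simp only [coeff_derivative, coeff_zero, mul_eq_zero, hn, false_or] at this
  rw [← ringChar.spec]; exact_mod_cast this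

lemma aux_mem_closure {F : Type*} [Field F] (r : F[X]) (h : derivative r = 0) :
    algebraMap F[X] (RatFunc F) r ∈
      Subfield.closure (Set.range (RatFunc.C (K := F)) ∪ {RatFunc.X ^ ringChar F}) := by
  rw [r.as_sum_support_C_mul_X_pow, map_sum]
  refine sum_mem fun n hn => ?_
  obtain ⟨k, rfl⟩ := aux_dvd_of_deriv r h n (mem_support_iff.1 hn)
  rw [map_mul, map_pow, RatFunc.algebraMap_C, RatFunc.algebraMap_X, pow_mul]
  refine mul_mem (Subfield.subset_closure (Or.inl ⟨_, rfl⟩)) (pow_mem ?_ _)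
  exact Subfield.subset_closure (Or.inr rfl)

lemma aux_wronsk {F : Type*} [Field F] (a b : F[X]) (hab : IsRelPrime a b) (ha : a ≠ 0)
    (h : notInFtp F a b) : a * derivative b - derivative a * b ≠ 0 := by
  intro h0
  apply h
  have h1 : a ∣ derivative a * b := ⟨derivative b, by linear_combination -h0⟩
  have h2 : a ∣ derivative a := hab.dvd_of_dvd_mul_right h1
  have h3 : derivative a = 0 := by
    by_contra hne
    have hd : a.natDegree ≠ 0 := by
      intro h
      apply hne
      rw [natDegree_eq_zero] at h
      obtain ⟨r, rfl⟩ := h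
      simp
    have := natDegree_le_of_dvd h2 hne
    have := natDegree_derivative_lt hd
    omega
  have h4 : derivative b = 0 := by
    rw [h3] at h0
    simpa [ha] using h0
  exact div_mem (aux_mem_closure b h4) (aux_mem_closure a h3)

/-- pth powers -/
lemma aux_frob_poly {E : Type*} [Field E] [IsAlgClosed E] (p : ℕ) [Fact p.Prime] [CharP E p]
    (r : E[X]) (h : derivative r = 0) : ∃ q, q ^ p = r := by
  have hp : ringChar E = p := ringChar.eq E p ▸ rfl
  suffices r ∈ (frobenius E[X] p).range by
    obtain ⟨q, hq⟩ := this
    exact ⟨q, by simpa [frobenius_def] using hq⟩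
  rw [r.as_sum_support_C_mul_X_pow]
  refine sum_mem fun n hn => ?_
  obtain ⟨k, rfl⟩ := aux_dvd_of_deriv r h n (mem_support_iff.1 hn)
  obtain ⟨z, hz⟩ := IsAlgClosed.exists_pow_nat_eq (r.coeff (ringChar E * k))
    (Fact.out : p.Prime).pos
  refine ⟨Polynomial.C z * X ^ k, ?_⟩
  rw [frobenius_def, mul_pow, ← C_pow, hz, ← pow_mul, hp, mul_comm k]

lemma aux_frob_mv {σ E : Type*} [Field E] [IsAlgClosed E] (p : ℕ) [Fact p.Prime] [CharP E p]
    (h : MvPolynomial σ E[X]) (h1 : ∀ s, derivative (h.coeff s) = 0)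
    (h2 : ∀ s ∈ h.support, ∀ i, p ∣ s i) : ∃ q, q ^ p = h := by
  classical
  have : CharP (MvPolynomial σ E[X]) p := inferInstance
  have : ExpChar (MvPolynomial σ E[X]) p := .prime Fact.out
  suffices h ∈ (frobenius (MvPolynomial σ E[X]) p).range by
    obtain ⟨q, hq⟩ := this
    exact ⟨q, by simpa [frobenius_def] using hq⟩
  rw [← MvPolynomial.support_sum_monomial_coeff h]
  refine sum_mem fun s hs => ?_
  obtain ⟨z, hz⟩ := aux_frob_poly p _ (h1 s)
  refine ⟨MvPolynomial.monomial (s.mapRange (fun n => n / p) (by simp)) z, ?_⟩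
  rw [frobenius_def, MvPolynomial.monomial_pow, hz]
  suffices h3 : p • (s.mapRange (fun n => n / p) (by simp)) = s by rw [h3]
  ext i
  simp [Nat.mul_div_cancel' (h2 s hs i)]

end helpers

section helpers2
open Polynomial

variable {F : Type*} [Field F] {σ : Type*}

/-- substitution -/
noncomputable def auxPhi (a b c : σ → F[X]) :
    MvPolynomial σ F[X] →+* (MvPolynomial (σ ⊕ σ) F)[X] :=
  MvPolynomial.eval₂Hom (Polynomial.mapRingHom MvPolynomial.C)
    (fun i => (a i).map MvPolynomial.C * C (MvPolynomial.X (Sum.inl i))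
      + (b i).map MvPolynomial.C * C (MvPolynomial.X (Sum.inr i)) + (c i).map MvPolynomial.C)

/-- extended substitution -/
noncomputable def auxPhi' (a b c u v : σ → F[X]) :
    MvPolynomial (σ ⊕ σ) F[X] →+* (MvPolynomial (σ ⊕ σ) F)[X] :=
  MvPolynomial.eval₂Hom (Polynomial.mapRingHom MvPolynomial.C)
    (Sum.elim (fun i => (a i).map MvPolynomial.C * C (MvPolynomial.X (Sum.inl i))
      + (b i).map MvPolynomial.C * C (MvPolynomial.X (Sum.inr i)) + (c i).map MvPolynomial.C)
      (fun i => (u i).map MvPolynomial.C * C (MvPolynomial.X (Sum.inr i))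
      - (v i).map MvPolynomial.C * C (MvPolynomial.X (Sum.inl i))))

/-- inverse substitution -/
noncomputable def auxPsi (a b c u v : σ → F[X]) :
    (MvPolynomial (σ ⊕ σ) F)[X] →+* MvPolynomial (σ ⊕ σ) F[X] :=
  Polynomial.eval₂RingHom
    (MvPolynomial.eval₂Hom ((MvPolynomial.C).comp (Polynomial.C))
      (Sum.elim
        (fun i => MvPolynomial.C (u i) * (MvPolynomial.X (Sum.inl i) - MvPolynomial.C (c i))
          - MvPolynomial.C (b i) * MvPolynomial.X (Sum.inr i))
        (fun i => MvPolynomial.C (v i) * (MvPolynomial.X (Sum.inl i) - MvPolynomial.C (c i))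
          + MvPolynomial.C (a i) * MvPolynomial.X (Sum.inr i))))
    (MvPolynomial.C Polynomial.X)

lemma auxPhi_C (a b c : σ → F[X]) (r : F[X]) :
    auxPhi a b c (MvPolynomial.C r) = r.map MvPolynomial.C := by
  simp [auxPhi]

lemma auxPhi_X (a b c : σ → F[X]) (i : σ) :
    auxPhi a b c (MvPolynomial.X i) = (a i).map MvPolynomial.C * C (MvPolynomial.X (Sum.inl i))
      + (b i).map MvPolynomial.C * C (MvPolynomial.X (Sum.inr i)) + (c i).map MvPolynomial.C := by
  simp [auxPhi]

lemma auxPsi_map (a b c u v : σ → F[X]) (r : F[X]) :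
    auxPsi a b c u v (r.map MvPolynomial.C) = MvPolynomial.C r := by
  have : (auxPsi a b c u v).comp (Polynomial.mapRingHom MvPolynomial.C) = MvPolynomial.C := by
    ext <;> simp [auxPsi]
  exact congrArg (fun φ => φ r) this

lemma auxPsi_inl (a b c u v : σ → F[X]) (i : σ) :
    auxPsi a b c u v (C (MvPolynomial.X (Sum.inl i))) =
      MvPolynomial.C (u i) * (MvPolynomial.X (Sum.inl i) - MvPolynomial.C (c i))
          - MvPolynomial.C (b i) * MvPolynomial.X (Sum.inr i) := by
  simp [auxPsi]

lemma auxPsi_inr (a b c u v : σ → F[X]) (i : σ) :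
    auxPsi a b c u v (C (MvPolynomial.X (Sum.inr i))) =
      MvPolynomial.C (v i) * (MvPolynomial.X (Sum.inl i) - MvPolynomial.C (c i))
          + MvPolynomial.C (a i) * MvPolynomial.X (Sum.inr i) := by
  simp [auxPsi]

lemma auxPsi_phi (a b c u v : σ → F[X]) (huv : ∀ i, u i * a i + v i * b i = 1)
    (h : MvPolynomial σ F[X]) :
    auxPsi a b c u v (auxPhi a b c h) = MvPolynomial.rename Sum.inl h := by
  suffices H : (auxPsi a b c u v).comp (auxPhi a b c) =
      (MvPolynomial.rename (Sum.inl : σ → σ ⊕ σ) : _ →ₐ[F[X]] _).toRingHom from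
    congrArg (fun φ => φ h) H
  apply MvPolynomial.ringHom_ext
  · intro r
    simp only [RingHom.comp_apply, auxPhi_C, auxPsi_map]
    simp
  · intro i
    simp only [RingHom.comp_apply, auxPhi_X, map_add, map_mul, auxPsi_map, auxPsi_inl, auxPsi_inr]
    have := congrArg (MvPolynomial.C (σ := σ ⊕ σ)) (huv i)
    simp only [map_add, map_mul, map_one] at this
    simp only [AlgHom.toRingHom_eq_coe, RingHom.coe_coe, MvPolynomial.rename_X]
    linear_combination (MvPolynomial.X (Sum.inl i) - MvPolynomial.C (c i)) * this

lemma auxPhi'_psi (a b c u v : σ → F[X]) (huv : ∀ i, u i * a i + v i * b i = 1)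
    (h : (MvPolynomial (σ ⊕ σ) F)[X]) :
    auxPhi' a b c u v (auxPsi a b c u v h) = h := by
  suffices H : (auxPhi' a b c u v).comp (auxPsi a b c u v) = RingHom.id _ from
    congrArg (fun φ => φ h) H
  have hm : ∀ r, auxPhi' a b c u v (MvPolynomial.C r) = r.map MvPolynomial.C := by
    intro r; simp [auxPhi']
  have hl : ∀ i, auxPhi' a b c u v (MvPolynomial.X (Sum.inl i)) =
      (a i).map MvPolynomial.C * C (MvPolynomial.X (Sum.inl i))
      + (b i).map MvPolynomial.C * C (MvPolynomial.X (Sum.inr i))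
      + (c i).map MvPolynomial.C := by
    intro r; simp [auxPhi']
  have hrr : ∀ i, auxPhi' a b c u v (MvPolynomial.X (Sum.inr i)) =
      (u i).map MvPolynomial.C * C (MvPolynomial.X (Sum.inr i))
      - (v i).map MvPolynomial.C * C (MvPolynomial.X (Sum.inl i)) := by
    intro r; simp [auxPhi']
  have hu : ∀ i, (u i).map MvPolynomial.C * (a i).map MvPolynomial.C
      + (v i).map MvPolynomial.C * (b i).map MvPolynomial.C =
        (1 : (MvPolynomial (σ ⊕ σ) F)[X]) := by
    intro i
    rw [← Polynomial.map_mul, ← Polynomial.map_mul, ← Polynomial.map_add, huv, Polynomial.map_one]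
  apply Polynomial.ringHom_ext'
  · apply MvPolynomial.ringHom_ext
    · intro r
      simp [auxPsi, auxPhi']
    · rintro (i | i)
      · simp only [RingHom.comp_apply, auxPsi_inl, map_add, map_sub, map_mul, hm, hl, hrr,
          RingHom.id_apply]
        linear_combination C (MvPolynomial.X (Sum.inl i)) * hu i
      · simp only [RingHom.comp_apply, auxPsi_inr, map_add, map_sub, map_mul, hm, hl, hrr,
          RingHom.id_apply]
        linear_combination C (MvPolynomial.X (Sum.inr i)) * hu i
  · simp [auxPsi, auxPhi']

lemma auxPsi_injective (a b c u v : σ → F[X]) (huv : ∀ i, u i * a i + v i * b i = 1) :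
    Function.Injective (auxPsi a b c u v) :=
  Function.LeftInverse.injective (auxPhi'_psi a b c u v huv)

lemma auxPhi_injective (a b c u v : σ → F[X]) (huv : ∀ i, u i * a i + v i * b i = 1) :
    Function.Injective (auxPhi a b c) := by
  intro x y h
  have := congrArg (auxPsi a b c u v) h
  rw [auxPsi_phi _ _ _ _ _ huv, auxPsi_phi _ _ _ _ _ huv] at this
  exact MvPolynomial.rename_injective _ Sum.inl_injective this

lemma auxPhi_dvd (a b c u v : σ → F[X]) (huv : ∀ i, u i * a i + v i * b i = 1)
    (f : MvPolynomial σ F[X]) (hf : f ≠ 0) (h : (MvPolynomial (σ ⊕ σ) F)[X])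
    (hd : h ∣ auxPhi a b c f) : ∃ h0, h = auxPhi a b c h0 := by
  have h1 := map_dvd (auxPsi a b c u v) hd
  rw [auxPsi_phi _ _ _ _ _ huv] at h1
  obtain ⟨h0, hh⟩ := aux_dvd_rename f hf _ h1
  refine ⟨h0, auxPsi_injective a b c u v huv ?_⟩
  rw [auxPsi_phi _ _ _ _ _ huv, hh]

lemma auxPhi_dvd' (a b c u v : σ → F[X]) (huv : ∀ i, u i * a i + v i * b i = 1)
    (f h : MvPolynomial σ F[X]) 
    (hd : auxPhi a b c h ∣ auxPhi a b c f) : h ∣ f := by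
  have h1 := map_dvd (auxPsi a b c u v) hd
  rw [auxPsi_phi _ _ _ _ _ huv, auxPsi_phi _ _ _ _ _ huv] at h1
  have h2 := map_dvd (MvPolynomial.aeval (R := F[X]) (Sum.elim MvPolynomial.X
    (fun _ => (0 : MvPolynomial σ F[X])))) h1
  simpa only [MvPolynomial.aeval_rename, Sum.elim_comp_inl, MvPolynomial.aeval_X_left,
    AlgHom.id_apply] using h2

/-- coefficientwise derivative -/
noncomputable def auxcd (h : MvPolynomial σ F[X]) : MvPolynomial σ F[X] :=
  ∑ s ∈ h.support, MvPolynomial.monomial s (derivative (h.coeff s))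

lemma coeff_auxcd (h : MvPolynomial σ F[X]) (s) :
    (auxcd h).coeff s = derivative (h.coeff s) := by
  classical
  rw [auxcd, MvPolynomial.coeff_sum]
  simp only [MvPolynomial.coeff_monomial]
  rw [Finset.sum_ite_eq']
  split_ifs with hs
  · rfl
  · rw [MvPolynomial.notMem_support_iff.1 hs, derivative_zero]

lemma aux_chain [Fintype σ] (a b c : σ → F[X]) (h : MvPolynomial σ F[X]) :
    derivative (auxPhi a b c h) = auxPhi a b c (auxcd h) +
      ∑ i, derivative (auxPhi a b c (MvPolynomial.X i)) *
        auxPhi a b c (MvPolynomial.pderiv i h) := by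
  classical
  induction h using MvPolynomial.induction_on with
  | C r =>
    have : auxcd (MvPolynomial.C r : MvPolynomial σ F[X]) = MvPolynomial.C (derivative r) := by
      ext s : 1
      rw [coeff_auxcd, MvPolynomial.coeff_C, MvPolynomial.coeff_C]
      split_ifs <;> simp
    rw [this, auxPhi_C, auxPhi_C]
    simp [derivative_map]
  | add p q hp hq =>
    have : auxcd (p + q) = auxcd p + auxcd q := by
      ext s : 1
      simp [coeff_auxcd]
    rw [this]
    simp only [map_add, hp, hq, mul_add, Finset.sum_add_distrib]
    ring
  | mul_X p i hp =>
    have : auxcd (p * MvPolynomial.X i) = auxcd p * MvPolynomial.X i := by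
      ext s : 1
      rw [coeff_auxcd, MvPolynomial.coeff_mul_X', MvPolynomial.coeff_mul_X']
      split_ifs <;> simp [coeff_auxcd]
    rw [this, map_mul, derivative_mul, hp]
    simp only [Derivation.leibniz, MvPolynomial.pderiv_X, smul_eq_mul, map_add, map_mul, mul_add,
      Finset.sum_add_distrib, add_mul, Finset.sum_mul]
    have h2 : ∑ x, derivative (auxPhi a b c (MvPolynomial.X x)) *
        (auxPhi a b c p * auxPhi a b c (Pi.single (M := fun _ => MvPolynomial σ F[X]) x 1 i))
        = auxPhi a b c p * derivative (auxPhi a b c (MvPolynomial.X i)) := by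
      rw [Finset.sum_eq_single i]
      · simp; ring
      · intro j _ hj
        simp [Pi.single_eq_of_ne hj.symm]
      · simp
    have h3 : ∀ x, derivative (auxPhi a b c (MvPolynomial.X x)) *
      (auxPhi a b c (MvPolynomial.X i) * auxPhi a b c (MvPolynomial.pderiv x p)) =
      derivative (auxPhi a b c (MvPolynomial.X x)) * auxPhi a b c (MvPolynomial.pderiv x p) *
        auxPhi a b c (MvPolynomial.X i) := fun x => by ring
    simp only [h3]
    have h4 := h2
    rw [h4]
    ring

lemma aux_pderiv_zero [Fintype σ] (a b c u v : σ → F[X])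
    (huv : ∀ i, u i * a i + v i * b i = 1)
    (hw : ∀ i, a i * derivative (b i) - derivative (a i) * b i ≠ 0)
    (h : MvPolynomial σ F[X]) (h0 : derivative (auxPhi a b c h) = 0) :
    (∀ i, MvPolynomial.pderiv i h = 0) ∧ auxcd h = 0 := by
  classical
  have h1 : ∀ i, MvPolynomial.pderiv i h = 0 := by
    intro i
    have e := aux_chain a b c h
    rw [h0] at e
    have e2 := congrArg (fun x => MvPolynomial.pderiv (Sum.inr i) (auxPsi a b c u v x)) e
    have hz : ∀ q : MvPolynomial σ F[X], MvPolynomial.pderiv (Sum.inr i)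
        (MvPolynomial.rename (Sum.inl : σ → σ ⊕ σ) q) = 0 := by
      intro q
      apply MvPolynomial.pderiv_eq_zero_of_notMem_vars
      intro hm
      have := MvPolynomial.vars_rename _ _ hm
      simp at this
    simp only [map_zero, map_add, map_sum, map_mul, auxPsi_phi _ _ _ _ _ huv, hz, zero_add,
      Derivation.leibniz, smul_zero, smul_eq_mul, mul_zero] at e2
    have hd : ∀ j, auxPsi a b c u v (derivative (auxPhi a b c (MvPolynomial.X j))) =
        MvPolynomial.C (derivative (a j)) *
        (MvPolynomial.C (u j) * (MvPolynomial.X (Sum.inl j) - MvPolynomial.C (c j))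
          - MvPolynomial.C (b j) * MvPolynomial.X (Sum.inr j)) +
        MvPolynomial.C (derivative (b j)) *
        (MvPolynomial.C (v j) * (MvPolynomial.X (Sum.inl j) - MvPolynomial.C (c j))
          + MvPolynomial.C (a j) * MvPolynomial.X (Sum.inr j))
        + MvPolynomial.C (derivative (c j)) := by
      intro j
      rw [auxPhi_X]
      simp only [derivative_add, derivative_mul, derivative_C, mul_zero, add_zero,
        derivative_map, map_add, map_mul, auxPsi_map, auxPsi_inl, auxPsi_inr]
    have hpd : ∀ j, MvPolynomial.pderiv (Sum.inr i)
        (auxPsi a b c u v (derivative (auxPhi a b c (MvPolynomial.X j)))) =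
        if j = i then MvPolynomial.C (a i * derivative (b i) - derivative (a i) * b i) else 0 := by
      intro j
      rw [hd]
      simp only [map_add, map_sub, Derivation.leibniz, MvPolynomial.pderiv_C, smul_zero,
        smul_eq_mul, MvPolynomial.pderiv_X, mul_zero, add_zero, sub_zero, zero_add, map_mul]
      split_ifs with hji
      · subst hji
        simp
        ring
      · have : (Sum.inr j : σ ⊕ σ) ≠ Sum.inr i := by simpa using hji
        simp [Pi.single_apply, this, this.symm]
    simp only [hpd] at e2
    simp at e2
    have hC : (MvPolynomial.C (a i * derivative (b i) - derivative (a i) * b i) :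
      MvPolynomial (σ ⊕ σ) F[X]) ≠ 0 := by
      rw [Ne, MvPolynomial.C_eq_zero]
      exact hw i
    simp only [map_sub, map_mul] at hC
    have e3 : MvPolynomial.rename (Sum.inl : σ → σ ⊕ σ) (MvPolynomial.pderiv i h) = 0 := by
      rcases e2 with e2 | e2
      · exact e2
      · exact absurd e2 hC
    rw [← map_zero (MvPolynomial.rename (Sum.inl : σ → σ ⊕ σ))] at e3
    exact MvPolynomial.rename_injective _ Sum.inl_injective e3
  refine ⟨h1, ?_⟩
  have e := aux_chain a b c h
  rw [h0] at e
  simp only [h1, map_zero, mul_zero, Finset.sum_const_zero, add_zero] at e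
  apply auxPhi_injective a b c u v huv
  rw [← e, map_zero]

lemma aux_natDegree [Fintype σ] (N : ℕ) (a b c : σ → F[X]) (f : MvPolynomial σ F[X])
    (hf : f.totalDegree ≤ N) (hc : ∀ s, (f.coeff s).natDegree ≤ N)
    (habc : ∀ i, (a i).natDegree ≤ N ∧ (b i).natDegree ≤ N ∧ (c i).natDegree ≤ N) :
    (auxPhi a b c f).natDegree ≤ N + N * N ∧ auxW N (auxPhi a b c f) := by
  have e : auxPhi a b c f = ∑ s ∈ f.support, (f.coeff s).map MvPolynomial.C *
      ∏ i, (auxPhi a b c (MvPolynomial.X i)) ^ s i := by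
    conv_lhs => rw [f.as_sum]
    rw [map_sum]
    refine Finset.sum_congr rfl fun s _ => ?_
    rw [MvPolynomial.monomial_eq, map_mul, auxPhi_C, Finsupp.prod_fintype _ _ (by simp), map_prod]
    simp only [map_pow]
  have hs : ∀ s ∈ f.support, ∑ i, s i ≤ N := by
    intro s hs
    have := MvPolynomial.le_totalDegree hs
    rw [Finsupp.sum_fintype _ _ (by simp)] at this
    omega
  have hm : ∀ r : F[X], r.natDegree ≤ N →
      (r.map (MvPolynomial.C : F →+* MvPolynomial (σ ⊕ σ) F)).natDegree ≤ N :=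
    fun r hr => natDegree_map_le.trans hr
  rw [e]
  constructor
  · apply natDegree_sum_le_of_forall_le
    intro s hss
    refine natDegree_mul_le.trans (add_le_add (hm _ (hc s)) ?_)
    refine (natDegree_prod_le _ _).trans ?_
    have : ∀ i ∈ Finset.univ, ((auxPhi a b c (MvPolynomial.X i)) ^ s i).natDegree ≤ s i * N := by
      intro i _
      refine natDegree_pow_le.trans (Nat.mul_le_mul_left _ ?_)
      rw [auxPhi_X]
      obtain ⟨h1, h2, h3⟩ := habc i
      refine natDegree_add_le_of_degree_le (natDegree_add_le_of_degree_le ?_ ?_) (hm _ h3)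
      · exact (natDegree_mul_C_le _ _).trans (hm _ h1)
      · exact (natDegree_mul_C_le _ _).trans (hm _ h2)
    refine (Finset.sum_le_sum this).trans ?_
    rw [← Finset.sum_mul]
    exact Nat.mul_le_mul_right _ (hs s hss)
  · apply auxW.sum
    intro s hss
    have hX : ∀ i, auxW 1 (auxPhi a b c (MvPolynomial.X i)) := by
      intro i
      rw [auxPhi_X]
      have hC : ∀ j : σ ⊕ σ, auxW 1 (C (MvPolynomial.X j : MvPolynomial (σ ⊕ σ) F)) := by
        intro j
        refine (auxW.C _).mono ?_
        rw [MvPolynomial.totalDegree_X]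
      exact ((((auxW.map _).mul (hC _)).mono (by simp)).add
        (((auxW.map _).mul (hC _)).mono (by simp))).add ((auxW.map _).mono (by simp))
    refine ((auxW.map _).mul (auxW.prod _ (fun i => s i * 1) _ fun i _ => (hX i).pow (s i))).mono ?_
    simpa using hs s hss

lemma aux_eval (a b c : σ → F[X]) (f : MvPolynomial σ F[X]) (β γ : σ → F) :
    MvPolynomial.eval (fun i => a i * Polynomial.C (β i) + b i * Polynomial.C (γ i) + c i) f =
    (auxPhi a b c f).map (MvPolynomial.eval (Sum.elim β γ)) := by
  have hm : ∀ r : F[X], (r.map (MvPolynomial.C : F →+* MvPolynomial (σ ⊕ σ) F)).map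
      (MvPolynomial.eval (Sum.elim β γ)) = r := by
    intro r
    rw [Polynomial.map_map]
    have : (MvPolynomial.eval (Sum.elim β γ)).comp MvPolynomial.C = RingHom.id F := by
      ext; simp
    rw [this, Polynomial.map_id]
  suffices H : MvPolynomial.eval
      (fun i => a i * Polynomial.C (β i) + b i * Polynomial.C (γ i) + c i) =
      (Polynomial.mapRingHom (MvPolynomial.eval (Sum.elim β γ))).comp (auxPhi a b c) from
    congrArg (fun φ => φ f) H
  apply MvPolynomial.ringHom_ext
  · intro r
    simp only [RingHom.comp_apply, auxPhi_C, coe_mapRingHom, hm, MvPolynomial.eval_C]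
  · intro i
    simp only [RingHom.comp_apply, auxPhi_X, coe_mapRingHom, hm, MvPolynomial.eval_X,
      Polynomial.map_add, Polynomial.map_mul, map_C, Sum.elim_inl, Sum.elim_inr]

/-- common factors are impossible -/
lemma aux_main [Fintype σ] (N : ℕ) (a b c : σ → F[X]) (f : MvPolynomial σ F[X])
    (hsq : Squarefree
      (MvPolynomial.map (Polynomial.mapRingHom (algebraMap F (AlgebraicClosure F))) f))
    (hab : ∀ i, IsRelPrime (a i) (b i))
    (hdeg : (auxPhi a b c f).natDegree ≤ N)
    (hcond : (ringChar F = 0 ∨ N < ringChar F) ∨ (∀ i, a i ≠ 0 ∧ notInFtp F (a i) (b i))) :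
    auxPhi a b c f ≠ 0 ∧
      (auxPhi a b c f).resultant (derivative (auxPhi a b c f)) ≠ 0 := by
  have hco : ∀ i, ∃ u v, u * a i + v * b i = 1 := fun i => (hab i).isCoprime
  choose u v huv using hco
  have hf : f ≠ 0 := by
    rintro rfl
    rw [map_zero] at hsq
    exact hsq.ne_zero rfl
  have hg : auxPhi a b c f ≠ 0 := by
    intro h
    apply hf
    apply auxPhi_injective a b c u v huv
    rw [h, map_zero]
  refine ⟨hg, fun hres => ?_⟩
  obtain ⟨h, hp, hpos, hd1, hd2⟩ := aux_exists_prime _ _ hg hres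
  obtain ⟨h0, rfl⟩ := auxPhi_dvd a b c u v huv f hf h hd1
  have hnu : ¬ IsUnit h0 := fun hu => hp.not_isUnit (hu.map _)
  have hd3 : h0 ∣ f := auxPhi_dvd' a b c u v huv f h0 hd1
  have hns : ¬ auxPhi a b c h0 * auxPhi a b c h0 ∣ auxPhi a b c f := by
    rw [← map_mul]
    intro hdd
    have := auxPhi_dvd' a b c u v huv _ _ hdd
    have h2 := map_dvd
      (MvPolynomial.map (Polynomial.mapRingHom (algebraMap F (AlgebraicClosure F)))) this
    rw [map_mul] at h2
    exact hnu (aux_isUnit_map _ _ (hsq _ h2))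
  have hder := aux_deriv_zero _ _ hp hd1 hd2 hns
  by_cases hsmall : ringChar F = 0 ∨ N < ringChar F
  · set q := auxPhi a b c h0 with hq
    have h1 : (q.natDegree : MvPolynomial (σ ⊕ σ) F) ≠ 0 := by
      intro h2
      have h3 : ((q.natDegree : F)) = 0 := by
        apply MvPolynomial.C_injective (σ ⊕ σ) F
        simpa using h2
      rw [ringChar.spec] at h3
      rcases hsmall with h4 | h4
      · rw [h4] at h3; exact hpos (Nat.eq_zero_of_zero_dvd h3)
      · have h5 := Nat.le_of_dvd (Nat.pos_of_ne_zero hpos) h3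
        have h6 := natDegree_le_of_dvd hd1 hg
        omega
    have h2 := congrArg (fun r => coeff r (q.natDegree - 1)) hder
    simp only [coeff_derivative, coeff_zero] at h2
    have h3 : q.natDegree - 1 + 1 = q.natDegree := by omega
    rw [h3, ← Nat.cast_succ, Nat.succ_eq_add_one, h3] at h2
    rcases mul_eq_zero.1 h2 with h4 | h4
    · exact hp.ne_zero (leadingCoeff_eq_zero.1 h4)
    · exact h1 h4
  · have hii := hcond.resolve_left hsmall
    push Not at hsmall
    have hprime : (ringChar F).Prime :=
      (CharP.char_is_prime_or_zero F (ringChar F)).resolve_right hsmall.1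
    obtain ⟨hp1, hp2⟩ := aux_pderiv_zero a b c u v huv
      (fun i => aux_wronsk _ _ (hab i) (hii i).1 (hii i).2) h0 hder
    have : Fact (ringChar F).Prime := ⟨hprime⟩
    have : CharP (AlgebraicClosure F) (ringChar F) :=
      charP_of_injective_algebraMap (algebraMap F (AlgebraicClosure F)).injective _
    obtain ⟨q, hq⟩ := aux_frob_mv (ringChar F)
      (MvPolynomial.map (Polynomial.mapRingHom (algebraMap F (AlgebraicClosure F))) h0)
      (by
        intro s
        rw [MvPolynomial.coeff_map, coe_mapRingHom, derivative_map, ← coeff_auxcd, hp2]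
        simp)
      (by
        intro s hs i
        have hs' : h0.coeff s ≠ 0 := by
          intro h
          rw [MvPolynomial.mem_support_iff, MvPolynomial.coeff_map, h, map_zero] at hs
          exact hs rfl
        rcases Nat.eq_zero_or_pos (s i) with h | h
        · rw [h]; exact dvd_zero _
        have e := congrArg (MvPolynomial.coeff (s - Finsupp.single i 1)) (hp1 i)
        rw [MvPolynomial.coeff_pderiv, tsub_add_cancel_of_le (by simpa [Nat.one_le_iff_ne_zero] using h.ne')] at e
        simp only [MvPolynomial.coeff_zero, mul_eq_zero, hs', false_or] at e
        have e2 : ((s - Finsupp.single i 1 : σ →₀ ℕ) i) + 1 = s i := by simp; omega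
        rw [← Nat.cast_succ, Nat.succ_eq_add_one, e2] at e
        rw [← ringChar.spec]
        apply Polynomial.C_injective
        simpa using e)
    have hqq : q * q ∣
        MvPolynomial.map (Polynomial.mapRingHom (algebraMap F (AlgebraicClosure F))) f := by
      refine Dvd.dvd.trans ?_ (map_dvd _ hd3)
      rw [← hq, ← pow_two]
      exact pow_dvd_pow _ hprime.two_le
    have := hsq q hqq
    apply hnu
    apply aux_isUnit_map (algebraMap F (AlgebraicClosure F))
    rw [← hq]
    exact this.pow _

end helpers2

/-- For every `N` there are constants `C N`, `C' N` such that for any field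
`F` of characteristic `p`, any `f ∈ F[t][x₁,…,x_d]` square-free over the algebraic closure
with `deg_t f ≤ N` and total `x`-degree at most `N`, and any `a_i, b_i, c_i ∈ F[t]` of degree
at most `N` with `gcd(a_i,b_i) = 1`, there is a polynomial `P` in `2d` variables of total
degree at most `C' N` vanishing at every `(β, γ) ∈ F^d × F^d` for which
`f(t, a₁β₁ + b₁γ₁ + c₁, …, a_dβ_d + b_dγ_d + c_d)` is not separable; moreover `P` can be
chosen nonzero whenever `p = 0` or `p > C N`, or `a_i ≠ 0` and `b_i/a_i ∉ F(t^p)` for all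
`i`. -/
theorem exists_discriminant_poly_multivariate (N : ℕ) :
    ∃ C C' : ℕ, ∀ (F : Type) [Field F] (d : ℕ),
      ∀ (f : MvPolynomial (Fin d) (Polynomial F)) (a b c : Fin d → Polynomial F),
        Squarefree
          (MvPolynomial.map (Polynomial.mapRingHom (algebraMap F (AlgebraicClosure F))) f) →
        (∀ i, IsRelPrime (a i) (b i)) →
        f.totalDegree ≤ N → (∀ s, (f.coeff s).natDegree ≤ N) →
        (∀ i, (a i).natDegree ≤ N ∧ (b i).natDegree ≤ N ∧ (c i).natDegree ≤ N) →
        ∃ P : MvPolynomial (Fin d ⊕ Fin d) F,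
          P.totalDegree ≤ C' ∧
          (∀ β γ : Fin d → F,
            ¬ (MvPolynomial.eval
                (fun i => a i * Polynomial.C (β i) + b i * Polynomial.C (γ i) + c i)
                f).Separable →
            MvPolynomial.eval (Sum.elim β γ) P = 0) ∧
          (((ringChar F = 0 ∨ C < ringChar F) ∨
              (∀ i, a i ≠ 0 ∧ notInFtp F (a i) (b i))) → P ≠ 0) := by
  refine ⟨N + N * N, N + (2 * (N + N * N)) * N, ?_⟩
  intro F _ d f a b c hsq hab hf hc habc
  obtain ⟨hd, hW⟩ := aux_natDegree N a b c f hf hc habc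
  have hd' : (Polynomial.derivative (auxPhi a b c f)).natDegree ≤ N + N * N :=
    (Polynomial.natDegree_derivative_le _).trans (by omega)
  refine ⟨(auxPhi a b c f).leadingCoeff *
    (auxPhi a b c f).resultant (Polynomial.derivative (auxPhi a b c f)), ?_, ?_, ?_⟩
  · refine (MvPolynomial.totalDegree_mul _ _).trans (add_le_add (hW _) ?_)
    exact aux_totalDegree_resultant _ _ _ _ hW hW.derivative (by omega)
  · intro β γ hsep
    rw [aux_eval] at hsep
    by_contra hne
    apply hsep
    rw [map_mul] at hne
    generalize auxPhi a b c f = g at *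
    by_cases h0 : g.natDegree = 0
    · obtain ⟨r, rfl⟩ := Polynomial.natDegree_eq_zero.1 h0
      rw [Polynomial.map_C]
      rw [Polynomial.separable_C]
      have := left_ne_zero_of_mul hne
      rw [Polynomial.leadingCoeff_C] at this
      exact IsUnit.mk0 _ this
    · obtain ⟨p, q, -, -, hpq⟩ := Polynomial.exists_mul_add_mul_eq_C_resultant g
        (Polynomial.derivative g) le_rfl le_rfl (Or.inl h0)
      have h1 := right_ne_zero_of_mul hne
      have h2 := congrArg (Polynomial.map (MvPolynomial.eval (Sum.elim β γ))) hpq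
      rw [Polynomial.map_add, Polynomial.map_mul, Polynomial.map_mul, Polynomial.map_C,
        ← Polynomial.derivative_map] at h2
      set e := MvPolynomial.eval (Sum.elim β γ) (g.resultant (Polynomial.derivative g)) with he
      refine ⟨Polynomial.C e⁻¹ * p.map (MvPolynomial.eval (Sum.elim β γ)),
        Polynomial.C e⁻¹ * q.map (MvPolynomial.eval (Sum.elim β γ)), ?_⟩
      have h3 : Polynomial.C e⁻¹ * Polynomial.C e = 1 := by
        rw [← Polynomial.C_mul, inv_mul_cancel₀ h1, Polynomial.C_1]
      linear_combination Polynomial.C e⁻¹ * h2 + h3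
  · intro hcond
    obtain ⟨h1, h2⟩ := aux_main (N + N * N) a b c f hsq hab hd hcond
    exact mul_ne_zero (Polynomial.leadingCoeff_ne_zero.2 h1) h2
end

section
/- Let D be a unique factorization domain, let d ≥ 1, and let a₁, b₁, c₁, …, a_d, b_d, c_d ∈ D with gcd(a_i, b_i) = 1 for each i. Let Ψ : D[x₁,…,x_d] → D[x₁,…,x_{2d}] be the D-algebra homomorphism with Ψ(x_i) = a_i·x_i + b_i·x_{d+i} + c_i for i = 1,…,d. If f ∈ D[x₁,…,x_d] is irreducible in D[x₁,…,x_d], then Ψ(f) is irreducible in D[x₁,…,x_{2d}]. -/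
open MvPolynomial in
/-- The substitution `Ψ`. -/
noncomputable def linPsi {R σ : Type*} [CommRing R] (a b c : σ → R) :
    MvPolynomial σ R →ₐ[R] MvPolynomial (σ ⊕ σ) R :=
  aeval (fun i => C (a i) * X (Sum.inl i) + C (b i) * X (Sum.inr i) + C (c i))

open MvPolynomial in
lemma linPsi_field_equiv {K σ : Type*} [Field K] (a b c : σ → K)
    (h : ∀ i, ¬ (a i = 0 ∧ b i = 0)) :
    ∃ e : MvPolynomial σ (MvPolynomial σ K) ≃ₐ[K] MvPolynomial (σ ⊕ σ) K,
      ∀ f, e (C f) = linPsi a b c f := by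
  have h' : ∀ i, ∃ α β : K, a i * α + b i * β = 1 := by
    intro i
    by_cases ha : a i = 0
    · have hb : b i ≠ 0 := fun hb => h i ⟨ha, hb⟩
      exact ⟨0, (b i)⁻¹, by simp [hb]⟩
    · exact ⟨(a i)⁻¹, 0, by simp [ha]⟩
  choose α β hαβ using h'
  let F : MvPolynomial (σ ⊕ σ) K →ₐ[K] MvPolynomial (σ ⊕ σ) K :=
    aeval (Sum.elim (fun i => C (α i) * X (Sum.inr i) - C (β i) * X (Sum.inl i))
      (fun i => C (a i) * X (Sum.inl i) + C (b i) * X (Sum.inr i) + C (c i)))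
  let G : MvPolynomial (σ ⊕ σ) K →ₐ[K] MvPolynomial (σ ⊕ σ) K :=
    aeval (Sum.elim (fun i => C (α i) * (X (Sum.inr i) - C (c i)) - C (b i) * X (Sum.inl i))
      (fun i => C (β i) * (X (Sum.inr i) - C (c i)) + C (a i) * X (Sum.inl i)))
  have hC : ∀ i, (C (a i) * C (α i) + C (b i) * C (β i) : MvPolynomial (σ ⊕ σ) K) = 1 := by
    intro i
    rw [← C_mul, ← C_mul, ← C_add, hαβ, C_1]
  have hFC : ∀ r, F (C r) = C r := fun r => F.commutes r
  have hGC : ∀ r, G (C r) = C r := fun r => G.commutes r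
  have hFl : ∀ i, F (X (Sum.inl i)) = C (α i) * X (Sum.inr i) - C (β i) * X (Sum.inl i) := by
    intro i; simp [F]
  have hFr : ∀ i, F (X (Sum.inr i)) =
      C (a i) * X (Sum.inl i) + C (b i) * X (Sum.inr i) + C (c i) := by
    intro i; simp [F]
  have hGl : ∀ i, G (X (Sum.inl i)) =
      C (α i) * (X (Sum.inr i) - C (c i)) - C (b i) * X (Sum.inl i) := by
    intro i; simp [G]
  have hGr : ∀ i, G (X (Sum.inr i)) =
      C (β i) * (X (Sum.inr i) - C (c i)) + C (a i) * X (Sum.inl i) := by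
    intro i; simp [G]
  have h1 : F.comp G = AlgHom.id K _ := by
    apply MvPolynomial.algHom_ext
    rintro (i | i)
    · simp only [AlgHom.comp_apply, hGl, map_sub, map_mul, map_add, hFC, hFl, hFr, AlgHom.id_apply]
      linear_combination (X (Sum.inl i)) * hC i
    · simp only [AlgHom.comp_apply, hGr, map_sub, map_mul, map_add, hFC, hFl, hFr, AlgHom.id_apply]
      linear_combination (X (Sum.inr i)) * hC i
  have h2 : G.comp F = AlgHom.id K _ := by
    apply MvPolynomial.algHom_ext
    rintro (i | i)
    · simp only [AlgHom.comp_apply, hGl, hGr, map_sub, map_mul, map_add, hGC, hFl, AlgHom.id_apply]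
      linear_combination (X (Sum.inl i)) * hC i
    · simp only [AlgHom.comp_apply, hGl, hGr, map_sub, map_mul, map_add, hGC, hFr, AlgHom.id_apply]
      linear_combination (X (Sum.inr i) - C (c i)) * hC i
  refine ⟨(sumAlgEquiv K σ σ).symm.trans (AlgEquiv.ofAlgHom F G h1 h2), fun f => ?_⟩
  have h3 : (sumAlgEquiv K σ σ).symm (C f) = rename Sum.inr f := by
    rw [AlgEquiv.symm_apply_eq]
    have := congrArg (fun φ => φ f) (sumAlgEquiv_comp_rename_inr (R := K) (S₁ := σ) (S₂ := σ))
    simpa using this.symm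
  rw [AlgEquiv.trans_apply, h3]
  change F (rename Sum.inr f) = _
  simp only [F, linPsi, aeval_rename]
  rfl

open MvPolynomial in
lemma linPsi_field_inj {K σ : Type*} [Field K] (a b c : σ → K)
    (h : ∀ i, ¬ (a i = 0 ∧ b i = 0)) : Function.Injective (linPsi a b c) := by
  obtain ⟨e, he⟩ := linPsi_field_equiv a b c h
  intro f g hfg
  rw [← he, ← he] at hfg
  exact C_injective _ _ (e.injective hfg)

open MvPolynomial in
lemma linPsi_field_closed {K σ : Type*} [Field K] (a b c : σ → K)
    (h : ∀ i, ¬ (a i = 0 ∧ b i = 0)) (f : MvPolynomial σ K) (hf : f ≠ 0)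
    (u v : MvPolynomial (σ ⊕ σ) K) (huv : linPsi a b c f = u * v) :
    ∃ g, u = linPsi a b c g := by
  obtain ⟨e, he⟩ := linPsi_field_equiv a b c h
  rw [← he] at huv
  have h1 : C f = e.symm u * e.symm v := by
    rw [← map_mul, ← huv, AlgEquiv.symm_apply_apply]
  have hne : e.symm u * e.symm v ≠ 0 := by
    rw [← h1]; simpa using hf
  have h2 := totalDegree_mul_of_isDomain (left_ne_zero_of_mul hne) (right_ne_zero_of_mul hne)
  rw [← h1, totalDegree_C] at h2
  have h3 : (e.symm u).totalDegree = 0 := by omega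
  rw [totalDegree_eq_zero_iff_eq_C] at h3
  refine ⟨coeff 0 (e.symm u), ?_⟩
  rw [← he, ← h3, AlgEquiv.apply_symm_apply]

open MvPolynomial in
lemma linPsi_map {R S σ : Type*} [CommRing R] [CommRing S] (φ : R →+* S) (a b c : σ → R)
    (f : MvPolynomial σ R) :
    map φ (linPsi a b c f) =
      linPsi (fun i => φ (a i)) (fun i => φ (b i)) (fun i => φ (c i)) (map φ f) := by
  induction f using MvPolynomial.induction_on with
  | C r => simp [linPsi]
  | add p q hp hq => simp [hp, hq]
  | mul_X p i hp => simp only [map_mul, hp, map_X]; simp [linPsi]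

section
variable {D σ : Type*} [CommRing D] [IsDomain D] [UniqueFactorizationMonoid D]
open MvPolynomial

lemma linPsi_inj (a b c : σ → D) (hab : ∀ i, IsRelPrime (a i) (b i)) :
    Function.Injective (linPsi a b c) := by
  intro f g hfg
  have h := congrArg (map (algebraMap D (FractionRing D))) hfg
  rw [linPsi_map, linPsi_map] at h
  refine map_injective _ (IsFractionRing.injective D (FractionRing D))
    (linPsi_field_inj _ _ _ ?_ h)
  rintro i ⟨h1, h2⟩
  rw [map_eq_zero_iff _ (IsFractionRing.injective D (FractionRing D))] at h1 h2
  exact not_isUnit_zero (hab i (by rw [h1]) (by rw [h2]))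

lemma linPsi_prime_dvd (a b c : σ → D) (hab : ∀ i, IsRelPrime (a i) (b i))
    (p : D) (hp : Prime p) (g : MvPolynomial σ D) (h : C p ∣ linPsi a b c g) : C p ∣ g := by
  have : (Ideal.span {p}).IsPrime := (Ideal.span_singleton_prime hp.ne_zero).2 hp
  let k := FractionRing (D ⧸ Ideal.span {p})
  let φ : D →+* k := (algebraMap (D ⧸ Ideal.span {p}) k).comp (Ideal.Quotient.mk _)
  have hφ : ∀ r, φ r = 0 ↔ p ∣ r := by
    intro r
    rw [← Ideal.mem_span_singleton, ← Ideal.Quotient.eq_zero_iff_mem]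
    exact map_eq_zero_iff _ (IsFractionRing.injective (D ⧸ Ideal.span {p}) k)
  have h0 : map φ (linPsi a b c g) = 0 := by
    obtain ⟨w, hw⟩ := h
    rw [hw, map_mul, map_C, (hφ p).2 dvd_rfl, C_0, zero_mul]
  rw [linPsi_map] at h0
  have h1 : map φ g = 0 := by
    refine linPsi_field_inj _ _ _ ?_ (h0.trans (map_zero _).symm)
    rintro i ⟨h1, h2⟩
    exact hp.not_isUnit (hab i ((hφ _).1 h1) ((hφ _).1 h2))
  rw [C_dvd_iff_dvd_coeff]
  intro m
  rw [← hφ, ← coeff_map, h1, coeff_zero]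

lemma linPsi_C (a b c : σ → D) (r : D) : linPsi a b c (C r) = C r :=
  (linPsi a b c).commutes r

lemma linPsi_sat (a b c : σ → D) (hab : ∀ i, IsRelPrime (a i) (b i)) (s : D) (hs : s ≠ 0) :
    ∀ (u : MvPolynomial (σ ⊕ σ) D) (g : MvPolynomial σ D), C s * u = linPsi a b c g →
      ∃ g', u = linPsi a b c g' := by
  induction s using UniqueFactorizationMonoid.induction_on_prime with
  | h₁ => exact absurd rfl hs
  | h₂ x hx =>
    intro u g h
    obtain ⟨y, hy⟩ := hx.exists_left_inv
    refine ⟨C y * g, ?_⟩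
    rw [map_mul, ← h, linPsi_C, ← mul_assoc, ← C_mul, hy, C_1, one_mul]
  | h₃ x p hx hp ih =>
    intro u g h
    have hd : C p ∣ linPsi a b c g := ⟨C x * u, by rw [← h, C_mul, mul_assoc]⟩
    obtain ⟨g', rfl⟩ := linPsi_prime_dvd a b c hab p hp g hd
    refine ih hx u g' ?_
    rw [map_mul (linPsi a b c), linPsi_C, C_mul, mul_assoc] at h
    exact mul_left_cancel₀ (by simpa using hp.ne_zero) h

lemma exists_clear_denom (g : MvPolynomial σ (FractionRing D)) :
    ∃ s : D, s ≠ 0 ∧ ∃ g' : MvPolynomial σ D,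
      C (algebraMap D (FractionRing D) s) * g = map (algebraMap D (FractionRing D)) g' := by
  induction g using MvPolynomial.induction_on with
  | C r =>
    obtain ⟨x, y, hy, rfl⟩ := IsFractionRing.div_surjective (A := D) r
    have hy0 := nonZeroDivisors.ne_zero hy
    refine ⟨y, hy0, C x, ?_⟩
    rw [map_C, ← C_mul, mul_div_cancel₀]
    simpa using hy0
  | add p q hp hq =>
    obtain ⟨s, hs, p', hp'⟩ := hp
    obtain ⟨t, ht, q', hq'⟩ := hq
    refine ⟨s * t, mul_ne_zero hs ht, C t * p' + C s * q', ?_⟩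
    simp only [map_add, map_mul, map_C, ← hp', ← hq']
    ring
  | mul_X p i hp =>
    obtain ⟨s, hs, p', hp'⟩ := hp
    exact ⟨s, hs, p' * X i, by rw [map_mul, map_X, ← hp', mul_assoc]⟩

lemma linPsi_closed (a b c : σ → D) (hab : ∀ i, IsRelPrime (a i) (b i))
    (f : MvPolynomial σ D) (hf : f ≠ 0)
    (u v : MvPolynomial (σ ⊕ σ) D) (huv : linPsi a b c f = u * v) :
    ∃ g, u = linPsi a b c g := by
  have hinj := IsFractionRing.injective D (FractionRing D)
  have h := congrArg (map (algebraMap D (FractionRing D))) huv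
  rw [linPsi_map, map_mul] at h
  obtain ⟨g, hg⟩ := linPsi_field_closed _ _ _ (by
    rintro i ⟨h1, h2⟩
    rw [map_eq_zero_iff _ hinj] at h1 h2
    exact not_isUnit_zero (hab i (by rw [h1]) (by rw [h2]))) _
    (by rwa [Ne, map_eq_zero_iff _ (map_injective _ hinj)]) _ _ h
  obtain ⟨s, hs, g', hg'⟩ := exists_clear_denom g
  refine linPsi_sat a b c hab s hs u g' ?_
  apply map_injective _ hinj
  rw [linPsi_map, ← hg', map_mul, map_C, hg, map_mul]
  congr 1
  exact ((linPsi _ _ _).commutes _).symm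

lemma linPsi_irreducible (a b c : σ → D) (hab : ∀ i, IsRelPrime (a i) (b i))
    (f : MvPolynomial σ D) (hf : Irreducible f) : Irreducible (linPsi a b c f) := by
  have hinj := linPsi_inj a b c hab
  refine ⟨fun hu => ?_, fun u v huv => ?_⟩
  · obtain ⟨v, hv⟩ := hu.exists_right_inv
    obtain ⟨g, rfl⟩ := linPsi_closed a b c hab 1 one_ne_zero v (linPsi a b c f)
      (by rw [map_one, mul_comm, hv])
    rw [← map_mul, ← map_one (linPsi a b c)] at hv
    exact hf.not_isUnit (IsUnit.of_mul_eq_one _ (hinj hv))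
  · obtain ⟨g, rfl⟩ := linPsi_closed a b c hab f hf.ne_zero u v huv
    obtain ⟨k, rfl⟩ := linPsi_closed a b c hab f hf.ne_zero v _ (huv.trans (mul_comm _ _))
    rw [← map_mul] at huv
    exact (hf.isUnit_or_isUnit (hinj huv)).imp (fun h => h.map _) (fun h => h.map _)

end



/-- Let `D` be a UFD, `d ≥ 1`, and `a_i, b_i, c_i ∈ D` with
`gcd(a_i, b_i) = 1` for each `i`. Let `Ψ : D[x₁,…,x_d] → D[x₁,…,x_{2d}]` be the `D`-algebra
homomorphism with `Ψ(x_i) = a_i·x_i + b_i·x_{d+i} + c_i` (the `2d` variables being indexed by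
`Fin d ⊕ Fin d`). If `f` is irreducible in `D[x₁,…,x_d]`, then `Ψ(f)` is irreducible in
`D[x₁,…,x_{2d}]`. -/
theorem irreducible_of_linear_subst_multivariate (D : Type*) [CommRing D] [IsDomain D]
    [UniqueFactorizationMonoid D] (d : ℕ) (hd : 1 ≤ d)
    (a b c : Fin d → D) (hab : ∀ i, IsRelPrime (a i) (b i))
    (f : MvPolynomial (Fin d) D) (hf : Irreducible f) :
    Irreducible
      (MvPolynomial.eval₂ MvPolynomial.C
        (fun i => MvPolynomial.C (a i) * MvPolynomial.X (Sum.inl i) +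
          MvPolynomial.C (b i) * MvPolynomial.X (Sum.inr i) + MvPolynomial.C (c i)) f :
        MvPolynomial (Fin d ⊕ Fin d) D) := by
  exact linPsi_irreducible a b c hab f hf
end
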